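/- arXiv:2012.05041 — 2 statements merged into one kernel-verified Lean document; each statement's English description precedes it below -/
import Mathlib

section
/- Let q_1, …, q_e be nonzero polynomials in d real variables all of whose nonzero coefficients are positive, let v_1, …, v_e > 0, let u ∈ ℝ^d, and let P = v_1·New(q_1) + ⋯ + v_e·New(q_e). If u lies in the interior of P, then the limit as ε → 0⁺ of ε^d · ∫_{ℝ^d_{>0}} (∏_{i=1}^d x_i^{ε u_i − 1}) · (∏_{j=1}^e q_j(x)^{−ε v_j}) dx exists and equals d! · vol((P − u)°), where vol is d-dimensional Lebesgue measure and (P − u)° = {y ∈ ℝ^d : ⟨y, z⟩ ≤ 1 for all z ∈ P − u} is the polar dual of the translated polytope P − u. -/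
open scoped BigOperators Pointwise

noncomputable section

/-- The Newton polytope of a polynomial `q` in `d` variables: the convex hull in
`ℝ^d` of the exponent vectors of the monomials of `q` with nonzero coefficient. -/
def newtonPolytope {d : ℕ} (q : MvPolynomial (Fin d) ℝ) : Set (Fin d → ℝ) :=
  convexHull ℝ ((fun (a : Fin d →₀ ℕ) (i : Fin d) => (a i : ℝ)) '' ↑q.support)

/-- The polar dual `S° = {y : ⟨y,z⟩ ≤ 1 for all z ∈ S}`. -/
def polarDual {d : ℕ} (S : Set (Fin d → ℝ)) : Set (Fin d → ℝ) :=
  {y | ∀ z ∈ S, ∑ i, y i * z i ≤ 1}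

/-!
In the coordinates `x = exp (t / ε)`, which turn `ε ^ d dx / x` into `dt`, a polynomial with
positive coefficients is comparable to its largest monomial `exp (h (t / ε))`, where `h` is the
support function of its Newton polytope. Hence the `ε`-th power of the Koba–Nielsen factor
`x ^ u ∏ⱼ qⱼ(x) ^ (-vⱼ)` lies between `c ^ ε * exp (-h t)` and `C ^ ε * exp (-h t)`, where `h` is
now the support function of `P - u`. Since `u` is interior to `P`, this `h` grows at least linearly,
so dominated convergence gives the limit `∫ exp (-h)`. As `h` is positively homogeneous, integrating
over its sublevel sets gives `∫ exp (-h) = ∫₀^∞ exp (-s) s ^ d ds * vol {h ≤ 1}`, and `{h ≤ 1}` is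
the polar dual of `P - u`.
-/

open MeasureTheory Asymptotics Filter Topology Set

section SupportFunction

variable {ι : Type*} [Fintype ι] {S T : Set (ι → ℝ)}

/-- The support function `t ↦ max_{z ∈ S} ⟨t, z⟩` of a set, which tropicalizes the polynomials
with Newton polytope `S`. The supremum has the junk value `0` when `S` is empty or
`⟨t, ·⟩` is unbounded above on `S`. -/
def supportFunction (S : Set (ι → ℝ)) (t : ι → ℝ) : ℝ :=
  sSup ((t ⬝ᵥ ·) '' S)

theorem bddAbove_dotProduct_image (hS : IsCompact S) (t : ι → ℝ) :
    BddAbove ((t ⬝ᵥ ·) '' S) :=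
  hS.bddAbove_image (by fun_prop)

theorem supportFunction_le_iff (hS : IsCompact S) (hne : S.Nonempty) {t : ι → ℝ} {r : ℝ} :
    supportFunction S t ≤ r ↔ ∀ z ∈ S, t ⬝ᵥ z ≤ r := by
  rw [supportFunction, csSup_le_iff (bddAbove_dotProduct_image hS t) (hne.image _),
    forall_mem_image]

theorem dotProduct_le_supportFunction (hS : IsCompact S) (t : ι → ℝ) {z : ι → ℝ} (hz : z ∈ S) :
    t ⬝ᵥ z ≤ supportFunction S t :=
  le_csSup (bddAbove_dotProduct_image hS t) (mem_image_of_mem _ hz)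

theorem exists_dotProduct_eq_supportFunction (hS : IsCompact S) (hne : S.Nonempty) (t : ι → ℝ) :
    ∃ z ∈ S, t ⬝ᵥ z = supportFunction S t :=
  (hS.image (by fun_prop)).sSup_mem (hne.image _)

theorem continuous_supportFunction (hS : IsCompact S) : Continuous (supportFunction S) :=
  hS.continuous_sSup (by fun_prop)

theorem supportFunction_smul (S : Set (ι → ℝ)) {c : ℝ} (hc : 0 ≤ c) (t : ι → ℝ) :
    supportFunction S (c • t) = c * supportFunction S t := by
  simp only [supportFunction, smul_dotProduct]
  rw [← smul_eq_mul, ← Real.sSup_smul_of_nonneg hc, ← image_smul, image_image]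

theorem supportFunction_smul_set (S : Set (ι → ℝ)) {c : ℝ} (hc : 0 ≤ c) (t : ι → ℝ) :
    supportFunction (c • S) t = c * supportFunction S t := by
  rw [← supportFunction_smul S hc, supportFunction, supportFunction, ← image_smul, image_image]
  simp only [dotProduct_smul, smul_dotProduct]

theorem supportFunction_add (hS : IsCompact S) (hSne : S.Nonempty) (hT : IsCompact T)
    (hTne : T.Nonempty) (t : ι → ℝ) :
    supportFunction (S + T) t = supportFunction S t + supportFunction T t := by
  simp only [supportFunction]
  rw [← csSup_add (hSne.image _) (bddAbove_dotProduct_image hS t) (hTne.image _)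
    (bddAbove_dotProduct_image hT t), ← image2_add, ← image2_add, image2_image_left,
    image2_image_right, image_image2]
  simp only [dotProduct_add]

theorem isCompact_finsetSum {M κ : Type*} [TopologicalSpace M] [AddCommMonoid M]
    [ContinuousAdd M] (s : Finset κ) {K : κ → Set M} (hK : ∀ j ∈ s, IsCompact (K j)) :
    IsCompact (∑ j ∈ s, K j) :=
  Finset.sum_induction K IsCompact (fun _ _ h₁ h₂ => h₁.add h₂) isCompact_singleton hK

theorem supportFunction_finsetSum {κ : Type*} (s : Finset κ) {K : κ → Set (ι → ℝ)}
    (hK : ∀ j ∈ s, IsCompact (K j)) (hne : ∀ j ∈ s, (K j).Nonempty) (t : ι → ℝ) :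
    supportFunction (∑ j ∈ s, K j) t = ∑ j ∈ s, supportFunction (K j) t := by
  induction s using Finset.cons_induction with
  | empty => simp [supportFunction]
  | cons j s hj ih =>
    rw [Finset.forall_mem_cons] at hK hne
    rw [Finset.sum_cons, Finset.sum_cons, ← ih hK.2 hne.2]
    exact supportFunction_add hK.1 hne.1 (isCompact_finsetSum s hK.2)
      (Finset.sum_induction K Set.Nonempty (fun _ _ => Set.Nonempty.add) zero_nonempty hne.2) t

theorem supportFunction_image_sub_const (hS : IsCompact S) (hne : S.Nonempty) (u t : ι → ℝ) :
    supportFunction ((· - u) '' S) t = supportFunction S t - t ⬝ᵥ u := by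
  refine eq_of_forall_ge_iff fun r => ?_
  rw [supportFunction_le_iff (hS.image (by fun_prop)) (hne.image _), sub_le_iff_le_add,
    supportFunction_le_iff hS hne, forall_mem_image]
  simp only [dotProduct_sub, sub_le_iff_le_add]

theorem supportFunction_convexHull (hS : S.Finite) (hne : S.Nonempty) (t : ι → ℝ) :
    supportFunction (convexHull ℝ S) t = supportFunction S t := by
  refine eq_of_forall_ge_iff fun r => ?_
  rw [supportFunction_le_iff (hS.isCompact_convexHull ℝ) hne.convexHull,
    supportFunction_le_iff hS.isCompact hne]
  exact (convex_halfSpace_le (dotProductBilin ℝ ℝ t).isLinear r).convexHull_subset_iff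

theorem exists_mul_norm_le_supportFunction (hS : IsCompact S) (h0 : 0 ∈ interior S) :
    ∃ δ > 0, ∀ t, δ * ‖t‖ ≤ supportFunction S t := by
  classical
  obtain ⟨δ, hδ, hball⟩ := Metric.nhds_basis_closedBall.mem_iff.1 (mem_interior_iff_mem_nhds.1 h0)
  refine ⟨δ, hδ, fun t => ?_⟩
  have coord_le (i : ι) (s : ℝ) (hs : |s| = δ) : t i * s ≤ supportFunction S t := by
    rw [← dotProduct_single]
    exact dotProduct_le_supportFunction hS t (hball (by simp [Pi.norm_single, hs]))
  have nonneg : 0 ≤ supportFunction S t := by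
    simpa using dotProduct_le_supportFunction hS t (interior_subset h0)
  rw [← le_div_iff₀' hδ, pi_norm_le_iff_of_nonneg (by positivity)]
  intro i
  rw [le_div_iff₀ hδ, Real.norm_eq_abs]
  rcases abs_choice (t i) with h | h <;> rw [h]
  · exact coord_le i δ (abs_of_pos hδ)
  · simpa using coord_le i (-δ) (by rw [abs_neg, abs_of_pos hδ])

theorem isBounded_supportFunction_le (hS : IsCompact S) (h0 : 0 ∈ interior S) (r : ℝ) :
    Bornology.IsBounded {t | supportFunction S t ≤ r} := by
  obtain ⟨δ, hδ, h⟩ := exists_mul_norm_le_supportFunction hS h0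
  refine isBounded_iff_forall_norm_le.2 ⟨r / δ, fun t ht => ?_⟩
  rw [le_div_iff₀' hδ]
  exact (h t).trans ht

theorem polarDual_eq_supportFunction_le_one {d : ℕ} {S : Set (Fin d → ℝ)} (hS : IsCompact S)
    (hne : S.Nonempty) : polarDual S = {t | supportFunction S t ≤ 1} :=
  ext fun _ => (supportFunction_le_iff hS hne).symm

end SupportFunction

section HomogeneousExponential

theorem sublevel_eq_smul_sublevel_one {E : Type*} [AddCommGroup E] [Module ℝ E] {g : E → ℝ}
    (hhom : ∀ s > 0, ∀ t, g (s • t) = s * g t) {s : ℝ} (hs : 0 < s) :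
    {t | g t ≤ s} = s • {t | g t ≤ 1} := by
  ext t
  rw [mem_smul_set_iff_inv_smul_mem₀ hs.ne', mem_ofPred_eq, mem_ofPred_eq, hhom _ (inv_pos.2 hs),
    inv_mul_le_one₀ hs]

theorem lintegral_Ici_exp_neg (a : ℝ) :
    ∫⁻ s in Ici a, ENNReal.ofReal (Real.exp (-s)) = ENNReal.ofReal (Real.exp (-a)) := by
  rw [← restrict_Ioi_eq_restrict_Ici, ← integral_exp_neg_Ioi a,
    ofReal_integral_eq_lintegral_ofReal (integrableOn_exp_neg_Ioi a)
      (ae_of_all _ fun s => (Real.exp_pos _).le)]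

theorem lintegral_Ioi_exp_neg_mul_pow (n : ℕ) :
    ∫⁻ s in Ioi (0 : ℝ), ENNReal.ofReal (Real.exp (-s) * s ^ n) = n.factorial := by
  have hconv := Real.GammaIntegral_convergent (s := n + 1) (by positivity)
  have hGamma := Real.Gamma_eq_integral (s := n + 1) (by positivity)
  simp only [Real.Gamma_nat_eq_factorial, add_sub_cancel_right, Real.rpow_natCast] at hconv hGamma
  rw [← ofReal_integral_eq_lintegral_ofReal hconv, ← hGamma, ENNReal.ofReal_natCast]
  filter_upwards [ae_restrict_mem measurableSet_Ioi] with s hs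
  have : (0 : ℝ) < s := hs
  simp only [Pi.zero_apply]
  positivity

variable {E : Type*} [NormedAddCommGroup E] [NormedSpace ℝ E] [FiniteDimensional ℝ E]
  [MeasurableSpace E] [BorelSpace E] {μ : Measure E} [μ.IsAddHaarMeasure] {g : E → ℝ}

theorem lintegral_exp_neg_of_homogeneous (hg : Measurable g) (hnonneg : ∀ t, 0 ≤ g t)
    (hhom : ∀ s > 0, ∀ t, g (s • t) = s * g t) :
    ∫⁻ t, ENNReal.ofReal (Real.exp (-g t)) ∂μ =
      (Module.finrank ℝ E).factorial * μ {t | g t ≤ 1} := by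
  let w (s : ℝ) : ENNReal := ENNReal.ofReal (Real.exp (-s))
  let W : E × ℝ → ENNReal := {p | g p.1 ≤ p.2}.indicator fun p => w p.2
  have measurable_W : Measurable W :=
    Measurable.indicator (by fun_prop) (measurableSet_le (by fun_prop) (by fun_prop))
  calc ∫⁻ t, w (g t) ∂μ
      = ∫⁻ t, (∫⁻ s in Ioi (0 : ℝ), W (t, s)) ∂μ := by
        refine lintegral_congr fun t => ?_
        simp only [w]
        rw [restrict_Ioi_eq_restrict_Ici, ← lintegral_Ici_exp_neg,
          ← sup_eq_left.2 (hnonneg t), ← Ici_inter_Ici,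
          ← Measure.restrict_restrict measurableSet_Ici, ← lintegral_indicator measurableSet_Ici]
        rfl
    _ = ∫⁻ s in Ioi (0 : ℝ), ∫⁻ t, W (t, s) ∂μ :=
        lintegral_lintegral_swap measurable_W.aemeasurable
    _ = ∫⁻ s in Ioi (0 : ℝ), w s * μ {t | g t ≤ s} := by
        refine lintegral_congr fun s => ?_
        rw [← lintegral_indicator_const (measurableSet_le hg measurable_const)]
        rfl
    _ = ∫⁻ s in Ioi (0 : ℝ), ENNReal.ofReal (Real.exp (-s) * s ^ Module.finrank ℝ E) *
          μ {t | g t ≤ 1} := by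
        refine setLIntegral_congr_fun measurableSet_Ioi fun s (hs : 0 < s) => ?_
        rw [sublevel_eq_smul_sublevel_one hhom hs, Measure.addHaar_smul,
          abs_of_pos (pow_pos hs _), ENNReal.ofReal_mul (Real.exp_pos _).le, mul_assoc]
    _ = (Module.finrank ℝ E).factorial * μ {t | g t ≤ 1} := by
        rw [lintegral_mul_const _ (by fun_prop), lintegral_Ioi_exp_neg_mul_pow]

theorem integral_exp_neg_of_homogeneous (hg : Measurable g) (hnonneg : ∀ t, 0 ≤ g t)
    (hhom : ∀ s > 0, ∀ t, g (s • t) = s * g t) :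
    ∫ t, Real.exp (-g t) ∂μ = (Module.finrank ℝ E).factorial * μ.real {t | g t ≤ 1} := by
  rw [integral_eq_lintegral_of_nonneg_ae (ae_of_all _ fun t => (Real.exp_pos _).le) (by fun_prop),
    lintegral_exp_neg_of_homogeneous hg hnonneg hhom, ENNReal.toReal_mul, ENNReal.toReal_natCast,
    measureReal_def]

theorem integrable_exp_neg_of_homogeneous (hg : Measurable g) (hnonneg : ∀ t, 0 ≤ g t)
    (hhom : ∀ s > 0, ∀ t, g (s • t) = s * g t) (hfin : μ {t | g t ≤ 1} ≠ ⊤) :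
    Integrable (fun t => Real.exp (-g t)) μ := by
  refine ⟨by fun_prop, ?_⟩
  rw [hasFiniteIntegral_iff_ofReal (ae_of_all _ fun t => (Real.exp_pos _).le),
    lintegral_exp_neg_of_homogeneous hg hnonneg hhom]
  exact ENNReal.mul_lt_top (ENNReal.natCast_lt_top _) hfin.lt_top

end HomogeneousExponential

section TropicalLimit

theorem tendsto_const_rpow_nhdsGT_zero {K : ℝ} (hK : 0 < K) :
    Tendsto (fun ε : ℝ => K ^ ε) (𝓝[>] 0) (𝓝 1) := by
  have h := (Real.continuous_const_rpow hK.ne').tendsto 0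
  rw [Real.rpow_zero] at h
  exact h.mono_left nhdsWithin_le_nhds

variable {E : Type*} [AddCommGroup E] [Module ℝ E] {f g : E → ℝ}

theorem exists_rpow_comp_inv_smul_bounds (hnonneg : ∀ t, 0 ≤ f t)
    (hΘ : f =Θ[⊤] fun t => Real.exp (-g t)) (hhom : ∀ s > 0, ∀ t, g (s • t) = s * g t) :
    ∃ c > 0, ∃ C > 0, ∀ ε > (0 : ℝ), ∀ t,
      f (ε⁻¹ • t) ^ ε ∈ Icc (c ^ ε * Real.exp (-g t)) (C ^ ε * Real.exp (-g t)) := by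
  obtain ⟨C, hC, hupper⟩ := hΘ.1.exists_pos
  obtain ⟨D, hD, hlower⟩ := hΘ.2.exists_pos
  simp only [isBigOWith_top, Real.norm_of_nonneg (hnonneg _),
    Real.norm_of_nonneg (Real.exp_nonneg _)] at hupper hlower
  refine ⟨D⁻¹, inv_pos.2 hD, C, hC, fun ε hε t => ?_⟩
  have rescale {K : ℝ} (hK : 0 < K) :
      K ^ ε * Real.exp (-g t) = (K * Real.exp (-g (ε⁻¹ • t))) ^ ε := by
    rw [Real.mul_rpow hK.le (Real.exp_nonneg _), ← Real.exp_mul, hhom _ (inv_pos.2 hε)]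
    congr 2
    field_simp
  rw [rescale hC, rescale (inv_pos.2 hD)]
  refine ⟨Real.rpow_le_rpow (by positivity) ?_ hε.le,
    Real.rpow_le_rpow (hnonneg _) (hupper _) hε.le⟩
  rw [inv_mul_le_iff₀ hD]
  exact hlower _

theorem tendsto_integral_rpow_comp_inv_smul [MeasurableSpace E] [MeasurableConstSMul ℝ E]
    {μ : Measure E} (hf : Measurable f) (hnonneg : ∀ t, 0 ≤ f t)
    (hΘ : f =Θ[⊤] fun t => Real.exp (-g t)) (hhom : ∀ s > 0, ∀ t, g (s • t) = s * g t)
    (hint : Integrable (fun t => Real.exp (-g t)) μ) :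
    Tendsto (fun ε : ℝ => ∫ t, f (ε⁻¹ • t) ^ ε ∂μ) (𝓝[>] 0) (𝓝 (∫ t, Real.exp (-g t) ∂μ)) := by
  obtain ⟨c, hc, C, hC, hbounds⟩ := exists_rpow_comp_inv_smul_bounds hnonneg hΘ hhom
  have eventually_bounds : ∀ᶠ ε in 𝓝[>] (0 : ℝ), ∀ t,
      f (ε⁻¹ • t) ^ ε ∈ Icc (c ^ ε * Real.exp (-g t)) (C ^ ε * Real.exp (-g t)) :=
    eventually_mem_nhdsWithin.mono hbounds
  have tendsto_bound {K : ℝ} (hK : 0 < K) (t : E) :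
      Tendsto (fun ε : ℝ => K ^ ε * Real.exp (-g t)) (𝓝[>] 0) (𝓝 (Real.exp (-g t))) := by
    simpa only [one_mul] using (tendsto_const_rpow_nhdsGT_zero hK).mul_const (Real.exp (-g t))
  refine tendsto_integral_filter_of_dominated_convergence (fun t => 2 * Real.exp (-g t)) ?_ ?_
    (hint.const_mul 2) (ae_of_all _ fun t => ?_)
  · exact Eventually.of_forall fun ε =>
      ((hf.comp (measurable_const_smul ε⁻¹)).pow_const ε).aestronglyMeasurable
  · filter_upwards [eventually_bounds,
      (tendsto_const_rpow_nhdsGT_zero hC).eventually_le_const one_lt_two] with ε hε hC2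
    refine ae_of_all _ fun t => ?_
    rw [Real.norm_of_nonneg (Real.rpow_nonneg (hnonneg _) _)]
    exact (hε t).2.trans (mul_le_mul_of_nonneg_right hC2 (Real.exp_nonneg _))
  · exact tendsto_of_tendsto_of_tendsto_of_le_of_le' (tendsto_bound hc t) (tendsto_bound hC t)
      (eventually_bounds.mono fun ε hε => (hε t).1) (eventually_bounds.mono fun ε hε => (hε t).2)

end TropicalLimit

section PositiveOrthant

variable {ι : Type*} [Fintype ι]

theorem integral_orthant_inv_prod_smul {F : Type*} [NormedAddCommGroup F] [NormedSpace ℝ F]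
    (f : (ι → ℝ) → F) :
    ∫ x in {x : ι → ℝ | ∀ i, 0 < x i}, (∏ i, x i)⁻¹ • f x =
      ∫ t : ι → ℝ, f fun i => Real.exp (t i) := by
  let φ : (ι → ℝ) → ι → ℝ := Pi.map fun _ => Real.exp
  let φ' (t : ι → ℝ) : (ι → ℝ) →L[ℝ] ι → ℝ := .pi fun i =>
    (ContinuousLinearMap.toSpanSingleton ℝ (Real.exp (t i))).comp (.proj i)
  have orthant_eq : {x : ι → ℝ | ∀ i, 0 < x i} = φ '' univ := by
    ext x
    simp [φ, range_piMap, Real.range_exp]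
  have hasFDerivAt_φ (t : ι → ℝ) : HasFDerivAt φ (φ' t) t :=
    hasFDerivAt_pi'' fun i =>
      (Real.hasDerivAt_exp (t i)).hasFDerivAt.comp (f := fun s : ι → ℝ => s i) t
        (hasFDerivAt_apply i t)
  have det_φ' (t : ι → ℝ) : (φ' t).det = ∏ i, Real.exp (t i) := by
    simp only [φ', ContinuousLinearMap.det_pi, ContinuousLinearMap.det_toSpanSingleton]
  rw [orthant_eq, integral_image_eq_integral_abs_det_fderiv_smul volume .univ
    (fun t _ => (hasFDerivAt_φ t).hasFDerivWithinAt)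
    (Function.Injective.piMap fun _ => Real.exp_injective).injOn, setIntegral_univ]
  refine integral_congr_ae (ae_of_all _ fun t => ?_)
  have prod_pos : 0 < ∏ i, Real.exp (t i) := Finset.prod_pos fun i _ => Real.exp_pos _
  simp only [det_φ', abs_of_pos prod_pos, φ, Pi.map_apply, smul_inv_smul₀ prod_pos.ne']
  rfl

theorem tendsto_pow_mul_integral_orthant_rpow {S : Set (ι → ℝ)} (hS : IsCompact S)
    (h0 : 0 ∈ interior S) {f : (ι → ℝ) → ℝ} (hf : Measurable f)
    (hnonneg : ∀ t : ι → ℝ, 0 ≤ f fun i => Real.exp (t i))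
    (hΘ : (fun t : ι → ℝ => f fun i => Real.exp (t i)) =Θ[⊤]
      fun t => Real.exp (-supportFunction S t)) :
    Tendsto (fun ε : ℝ => ε ^ Fintype.card ι *
        ∫ x in {x : ι → ℝ | ∀ i, 0 < x i}, (∏ i, x i)⁻¹ * f x ^ ε)
      (𝓝[>] 0) (𝓝 ((Fintype.card ι).factorial * volume.real {t | supportFunction S t ≤ 1})) := by
  have hmeas : Measurable (supportFunction S) := (continuous_supportFunction hS).measurable
  have hg (t : ι → ℝ) : 0 ≤ supportFunction S t := by
    simpa using dotProduct_le_supportFunction hS t (interior_subset h0)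
  have hhom : ∀ s > 0, ∀ t, supportFunction S (s • t) = s * supportFunction S t :=
    fun s hs => supportFunction_smul S hs.le
  have hfin : volume {t | supportFunction S t ≤ 1} ≠ ⊤ :=
    (isBounded_supportFunction_le hS h0 1).measure_lt_top.ne
  have hlim := tendsto_integral_rpow_comp_inv_smul (by fun_prop) hnonneg hΘ hhom
    (integrable_exp_neg_of_homogeneous (μ := volume) hmeas hg hhom hfin)
  rw [integral_exp_neg_of_homogeneous hmeas hg hhom, Module.finrank_fintype_fun_eq_card] at hlim
  refine hlim.congr' (eventually_mem_nhdsWithin.mono fun ε (hε : 0 < ε) => ?_)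
  simp only [← smul_eq_mul (∏ _, _)⁻¹, integral_orthant_inv_prod_smul]
  rw [← Module.finrank_fintype_fun_eq_card (R := ℝ), ← smul_eq_mul]
  exact Measure.integral_comp_inv_smul_of_nonneg volume
    (fun t : ι → ℝ => f (fun i => Real.exp (t i)) ^ ε) hε.le

end PositiveOrthant

section KobaNielsen

theorem isTheta_sum_mul_exp {α X : Type*} {s : Finset α} {k : α → ℝ} (hk : ∀ a ∈ s, 0 < k a)
    {φ : α → X → ℝ} {h : X → ℝ} (hle : ∀ a ∈ s, ∀ x, φ a x ≤ h x)
    (hmax : ∀ x, ∃ a ∈ s, φ a x = h x) (l : Filter X) :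
    (fun x => ∑ a ∈ s, k a * Real.exp (φ a x)) =Θ[l] fun x => Real.exp (h x) := by
  constructor
  · refine IsBigO.fun_sum fun a ha => (isBigO_of_le l fun x => ?_).const_mul_left (k a)
    simpa using hle a ha x
  · have exp_isBigO (a : α) (ha : a ∈ s) :
        (fun x => Real.exp (φ a x)) =O[l] fun x => ∑ a ∈ s, k a * Real.exp (φ a x) := by
      refine (isBigO_const_mul_left_iff (hk a ha).ne').1 (isBigO_of_le l fun x => ?_)
      have term_nonneg (b : α) (hb : b ∈ s) : 0 ≤ k b * Real.exp (φ b x) :=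
        mul_nonneg (hk b hb).le (Real.exp_nonneg _)
      rw [Real.norm_of_nonneg (term_nonneg a ha),
        Real.norm_of_nonneg (Finset.sum_nonneg term_nonneg)]
      exact Finset.single_le_sum term_nonneg ha
    refine (isBigO_of_le l fun x => ?_).trans (IsBigO.fun_sum exp_isBigO)
    obtain ⟨a, ha, h_eq⟩ := hmax x
    rw [Real.norm_of_nonneg (Real.exp_nonneg _),
      Real.norm_of_nonneg (Finset.sum_nonneg fun _ _ => Real.exp_nonneg _), ← h_eq]
    exact Finset.single_le_sum (f := fun a => Real.exp (φ a x))
      (fun _ _ => Real.exp_nonneg _) ha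

theorem eval_exp_eq_sum {ι : Type*} [Fintype ι] (q : MvPolynomial ι ℝ) (t : ι → ℝ) :
    MvPolynomial.eval (fun i => Real.exp (t i)) q =
      ∑ a ∈ q.support, q.coeff a * Real.exp (t ⬝ᵥ fun i => (a i : ℝ)) := by
  simp only [MvPolynomial.eval_eq', dotProduct, Real.exp_sum, mul_comm (t _), Real.exp_nat_mul]

theorem eval_nonneg_of_coeff_nonneg {ι : Type*} {q : MvPolynomial ι ℝ}
    (hq : ∀ a ∈ q.support, 0 ≤ q.coeff a) {x : ι → ℝ} (hx : ∀ i, 0 ≤ x i) :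
    0 ≤ MvPolynomial.eval x q := by
  rw [MvPolynomial.eval_eq]
  exact Finset.sum_nonneg fun a ha =>
    mul_nonneg (hq a ha) (Finset.prod_nonneg fun i _ => pow_nonneg (hx i) _)

variable {d : ℕ}

theorem isCompact_newtonPolytope (q : MvPolynomial (Fin d) ℝ) : IsCompact (newtonPolytope q) :=
  (q.support.finite_toSet.image _).isCompact_convexHull ℝ

theorem newtonPolytope_nonempty {q : MvPolynomial (Fin d) ℝ} (hq : q ≠ 0) :
    (newtonPolytope q).Nonempty :=
  ((Finset.coe_nonempty.2 (MvPolynomial.support_nonempty.2 hq)).image _).convexHull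

theorem isTheta_eval_exp {q : MvPolynomial (Fin d) ℝ} (hq : q ≠ 0)
    (hpos : ∀ a ∈ q.support, 0 < q.coeff a) (l : Filter (Fin d → ℝ)) :
    (fun t => MvPolynomial.eval (fun i => Real.exp (t i)) q) =Θ[l]
      fun t => Real.exp (supportFunction (newtonPolytope q) t) := by
  let A : Set (Fin d → ℝ) := (fun (a : Fin d →₀ ℕ) (i : Fin d) => (a i : ℝ)) '' ↑q.support
  have hfin : A.Finite := q.support.finite_toSet.image _
  have hne : A.Nonempty := (Finset.coe_nonempty.2 (MvPolynomial.support_nonempty.2 hq)).image _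
  have supportFunction_eq (t : Fin d → ℝ) :
      supportFunction (newtonPolytope q) t = supportFunction A t :=
    supportFunction_convexHull hfin hne t
  simp only [eval_exp_eq_sum, supportFunction_eq]
  refine isTheta_sum_mul_exp hpos (fun a ha t => ?_) (fun t => ?_) l
  · exact dotProduct_le_supportFunction hfin.isCompact t (mem_image_of_mem _ ha)
  · obtain ⟨_, ⟨a, ha, rfl⟩, h⟩ := exists_dotProduct_eq_supportFunction hfin.isCompact hne t
    exact ⟨a, ha, h⟩

variable {κ : Type*} [Fintype κ] {q : κ → MvPolynomial (Fin d) ℝ} {v : κ → ℝ}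

/-- The Koba–Nielsen factor `x^u ∏ⱼ qⱼ(x)^{-vⱼ}`, whose `ε`-th power is integrated against `dx/x`
in the string amplitude. -/
def kobaNielsenFactor (q : κ → MvPolynomial (Fin d) ℝ) (v : κ → ℝ) (u x : Fin d → ℝ) : ℝ :=
  (∏ i, x i ^ u i) * ∏ j, MvPolynomial.eval x (q j) ^ (-v j)

theorem measurable_kobaNielsenFactor (q : κ → MvPolynomial (Fin d) ℝ) (v : κ → ℝ)
    (u : Fin d → ℝ) : Measurable (kobaNielsenFactor q v u) := by
  have := fun j => (MvPolynomial.continuous_eval (q j)).measurable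
  unfold kobaNielsenFactor
  fun_prop

theorem kobaNielsenFactor_nonneg (hq : ∀ j, ∀ a ∈ (q j).support, 0 ≤ (q j).coeff a) (v : κ → ℝ)
    (u : Fin d → ℝ) {x : Fin d → ℝ} (hx : ∀ i, 0 ≤ x i) : 0 ≤ kobaNielsenFactor q v u x :=
  mul_nonneg (Finset.prod_nonneg fun i _ => Real.rpow_nonneg (hx i) _)
    (Finset.prod_nonneg fun j _ => Real.rpow_nonneg (eval_nonneg_of_coeff_nonneg (hq j) hx) _)

theorem inv_prod_mul_kobaNielsenFactor_rpow (hq : ∀ j, ∀ a ∈ (q j).support, 0 ≤ (q j).coeff a)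
    (v : κ → ℝ) (u : Fin d → ℝ) {x : Fin d → ℝ} (hx : ∀ i, 0 < x i) (ε : ℝ) :
    (∏ i, x i)⁻¹ * kobaNielsenFactor q v u x ^ ε =
      (∏ i, x i ^ (ε * u i - 1)) * ∏ j, MvPolynomial.eval x (q j) ^ (-(ε * v j)) := by
  have eval_nonneg (j : κ) := eval_nonneg_of_coeff_nonneg (hq j) fun i => (hx i).le
  have monomial_rpow : (∏ i, x i ^ u i) ^ ε = ∏ i, x i ^ (ε * u i) := by
    rw [← Real.finsetProd_rpow _ _ fun i _ => Real.rpow_nonneg (hx i).le _]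
    exact Finset.prod_congr rfl fun i _ => by rw [← Real.rpow_mul (hx i).le, mul_comm]
  have factors_rpow : (∏ j, MvPolynomial.eval x (q j) ^ (-v j)) ^ ε =
      ∏ j, MvPolynomial.eval x (q j) ^ (-(ε * v j)) := by
    rw [← Real.finsetProd_rpow _ _ fun j _ => Real.rpow_nonneg (eval_nonneg j) _]
    refine Finset.prod_congr rfl fun j _ => ?_
    rw [← Real.rpow_mul (eval_nonneg j), neg_mul, mul_comm]
  rw [kobaNielsenFactor, Real.mul_rpow
    (Finset.prod_nonneg fun i _ => Real.rpow_nonneg (hx i).le _)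
    (Finset.prod_nonneg fun j _ => Real.rpow_nonneg (eval_nonneg j) _), monomial_rpow, factors_rpow,
    ← mul_assoc, ← Finset.prod_inv_distrib, ← Finset.prod_mul_distrib]
  congr 1
  refine Finset.prod_congr rfl fun i _ => ?_
  rw [Real.rpow_sub_one (hx i).ne', div_eq_inv_mul]

theorem isCompact_sum_smul_newtonPolytope (q : κ → MvPolynomial (Fin d) ℝ) (v : κ → ℝ) :
    IsCompact (∑ j, v j • newtonPolytope (q j)) :=
  isCompact_finsetSum _ fun j _ => (isCompact_newtonPolytope (q j)).smul (v j)

theorem supportFunction_sum_smul_newtonPolytope (hq : ∀ j, q j ≠ 0) (hv : ∀ j, 0 ≤ v j)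
    (t : Fin d → ℝ) :
    supportFunction (∑ j, v j • newtonPolytope (q j)) t =
      ∑ j, v j * supportFunction (newtonPolytope (q j)) t := by
  rw [supportFunction_finsetSum Finset.univ
    (fun j _ => (isCompact_newtonPolytope (q j)).smul (v j))
    fun j _ => (newtonPolytope_nonempty (hq j)).smul_set]
  exact Finset.sum_congr rfl fun j _ => supportFunction_smul_set _ (hv j) t

theorem isTheta_kobaNielsenFactor_exp (hq : ∀ j, q j ≠ 0)
    (hpos : ∀ j, ∀ a ∈ (q j).support, 0 < (q j).coeff a) (v : κ → ℝ) (u : Fin d → ℝ)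
    (l : Filter (Fin d → ℝ)) :
    (fun t => kobaNielsenFactor q v u fun i => Real.exp (t i)) =Θ[l] fun t =>
      Real.exp (t ⬝ᵥ u - ∑ j, v j * supportFunction (newtonPolytope (q j)) t) := by
  have eval_isTheta (j : κ) :
      (fun t : Fin d → ℝ => MvPolynomial.eval (fun i => Real.exp (t i)) (q j) ^ (-v j)) =Θ[l]
        fun t => Real.exp (supportFunction (newtonPolytope (q j)) t) ^ (-v j) :=
    (isTheta_eval_exp (hq j) (hpos j) l).rpow
      (.of_forall fun t => eval_nonneg_of_coeff_nonneg (fun a ha => (hpos j a ha).le)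
        fun i => (Real.exp_nonneg _))
      (.of_forall fun t => Real.exp_nonneg _)
  refine ((isTheta_refl _ l).mul (.finsetProd fun j _ => eval_isTheta j)).trans_eventuallyEq
    (.of_forall fun t => ?_)
  simp only [← Real.exp_mul, ← Real.exp_sum, ← Real.exp_add, dotProduct, mul_neg, mul_comm (v _),
    Finset.sum_neg_distrib, sub_eq_add_neg]

end KobaNielsen

/-- If `u` is interior to `P = v₁·New(q₁) + ⋯ + vₑ·New(qₑ)`, then the limit as
`ε → 0⁺` of `ε^d ∫_{ℝ^d_{>0}} x^{εu-1} ∏ qⱼ(x)^{-εvⱼ} dx` exists and equals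
`d! · vol((P-u)°)`. -/
theorem stmt12 (d e : ℕ) (q : Fin e → MvPolynomial (Fin d) ℝ)
    (hq : ∀ j, q j ≠ 0)
    (hqpos : ∀ j, ∀ a ∈ (q j).support, 0 < (q j).coeff a)
    (v : Fin e → ℝ) (hv : ∀ j, 0 < v j) (u : Fin d → ℝ)
    (hu : u ∈ interior (∑ j, v j • newtonPolytope (q j))) :
    Filter.Tendsto
      (fun ε : ℝ => ε ^ d *
        ∫ x in {x : Fin d → ℝ | ∀ i, 0 < x i},
          (∏ i, x i ^ (ε * u i - 1)) *
            ∏ j, (MvPolynomial.eval x (q j)) ^ (-(ε * v j)))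
      (nhdsWithin 0 (Set.Ioi 0))
      (nhds ((Nat.factorial d : ℝ) *
        (MeasureTheory.volume
          (polarDual ((fun z => z - u) '' (∑ j, v j • newtonPolytope (q j))))).toReal)) := by
  set P := ∑ j, v j • newtonPolytope (q j)
  have hP : IsCompact P := isCompact_sum_smul_newtonPolytope q v
  have hPne : P.Nonempty := ⟨u, interior_subset hu⟩
  have hQ : IsCompact ((· - u) '' P) := hP.image (by fun_prop)
  have h0 : 0 ∈ interior ((· - u) '' P) :=
    (isOpenMap_sub_right u).image_interior_subset P ⟨u, hu, sub_self u⟩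
  have hcoeff (j) (a) (ha : a ∈ (q j).support) : 0 ≤ (q j).coeff a := (hqpos j a ha).le
  have hΘ : (fun t => kobaNielsenFactor q v u fun i => Real.exp (t i)) =Θ[⊤]
      fun t => Real.exp (-supportFunction ((· - u) '' P) t) := by
    simpa only [supportFunction_image_sub_const hP hPne, neg_sub, P,
      supportFunction_sum_smul_newtonPolytope hq fun j => (hv j).le] using
      isTheta_kobaNielsenFactor_exp hq hqpos v u ⊤
  have hlim := tendsto_pow_mul_integral_orthant_rpow hQ h0 (measurable_kobaNielsenFactor q v u)
    (fun t => kobaNielsenFactor_nonneg hcoeff v u fun i => Real.exp_nonneg _) hΘ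
  rw [polarDual_eq_supportFunction_le_one hQ (hPne.image _)]
  rw [Fintype.card_fin] at hlim
  refine hlim.congr fun ε => congrArg (ε ^ d * ·) ?_
  exact setIntegral_congr_fun (MeasurableSet.univ_pi' fun _ => measurableSet_Ioi)
    fun x hx => inv_prod_mul_kobaNielsenFactor_rpow hcoeff v u hx ε

end
end

section
/- Let s_{23}, s_{24}, s_{25}, s_{34}, s_{35}, s_{45}, s_{36}, s_{46}, s_{56} be positive real numbers and define L(y_1, y_2, y_3) = s_{23} log y_1 + s_{34} log y_2 + s_{45} log y_3 + s_{24} log(y_1+y_2) + s_{25} log(y_1+y_2+y_3) + s_{35} log(y_2+y_3) + s_{36} log(1+y_2+y_3) + s_{46} log(1+y_3) − (Σ_{(i,j)} s_{ij}) log(1+y_1+y_2+y_3), where the sum is over the nine indices above. Let Crit(L) be the set of ξ ∈ ℂ³ at which the nine quantities ξ_1, ξ_2, ξ_3, ξ_1+ξ_2, ξ_1+ξ_2+ξ_3, ξ_2+ξ_3, 1+ξ_2+ξ_3, 1+ξ_3, 1+ξ_1+ξ_2+ξ_3 are all nonzero and the three rational critical equations ∂L/∂y_k = 0 (k = 1,2,3)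 hold. Define s_{12} = s_{34}+s_{35}+s_{36}+s_{45}+s_{46}+s_{56}, s_{16} = s_{23}+s_{24}+s_{25}+s_{34}+s_{35}+s_{45}, s_{123} = s_{45}+s_{46}+s_{56}, s_{234} = s_{23}+s_{24}+s_{34}, and s_{345} = s_{34}+s_{35}+s_{45}. Then Crit(L) consists of exactly six points, the toric Hessian H_L(ξ) (the 3×3 matrix with entries θ_iθ_jL, θ_i = y_i ∂/∂y_i) is nonsingular at each ξ ∈ Crit(L), and Σ_{ξ∈Crit(L)} (−det(H_L(ξ))^{−1}) = 1/(s_{12} s_{34} s_{56}) + 1/(s_{12} s_{56} s_{123}) + 1/(s_{23} s_{56} s_{123}) + 1/(s_{23} s_{56} s_{234}) + 1/(s_{34} s_{56} s_{234}) + 1/(s_{16} s_{23} s_{45}) + 1/(s_{12} s_{34} s_{345}) + 1/(s_{12} s_{45} s_{123}) + 1/(s_{12} s_{45} s_{345}) + 1/(s_{16} s_{23} s_{234}) + 1/(s_{16} s_{34} s_{234}) + 1/(s_{16} s_{34} s_{345}) + 1/(s_{16} s_{45} s_{345}) + 1/(s_{23} s_{45} s_{123}). -/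
open scoped BigOperators

noncomputable section

/-- The constant terms of the nine affine-linear forms appearing in the six-point
CHY log-likelihood in the positive parameters `y₁, y₂, y₃`:
`y₁, y₂, y₃, y₁+y₂, y₁+y₂+y₃, y₂+y₃, 1+y₂+y₃, 1+y₃, 1+y₁+y₂+y₃`. -/
def amp6Const : Fin 9 → ℝ := ![0, 0, 0, 0, 0, 0, 1, 1, 1]

/-- The linear coefficient vectors of the nine affine-linear forms. -/
def amp6Lin : Fin 9 → Fin 3 → ℝ :=
  ![![1, 0, 0], ![0, 1, 0], ![0, 0, 1], ![1, 1, 0], ![1, 1, 1],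
    ![0, 1, 1], ![0, 1, 1], ![0, 0, 1], ![1, 1, 1]]

/-- The coefficients of the nine logarithmic terms of
`L = s₂₃ log y₁ + s₃₄ log y₂ + s₄₅ log y₃ + s₂₄ log(y₁+y₂) + s₂₅ log(y₁+y₂+y₃)
+ s₃₅ log(y₂+y₃) + s₃₆ log(1+y₂+y₃) + s₄₆ log(1+y₃) - (∑ sᵢⱼ) log(1+y₁+y₂+y₃)`. -/
def amp6Coeff (s23 s24 s25 s34 s35 s45 s36 s46 s56 : ℝ) : Fin 9 → ℝ :=
  ![s23, s34, s45, s24, s25, s35, s36, s46,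
    -(s23 + s24 + s25 + s34 + s35 + s45 + s36 + s46 + s56)]

/-- The nine affine-linear forms, evaluated at a complex point. -/
def amp6L (a : Fin 9) (y : Fin 3 → ℂ) : ℂ :=
  (amp6Const a : ℂ) + ∑ i, (amp6Lin a i : ℂ) * y i

/-- The critical set `Crit(L)`: points where the nine forms are nonzero and the
three rational critical equations `∂L/∂y_k = ∑ₐ cₐ dₐₖ/ℓₐ(y) = 0` hold. -/
def amp6Crit (c : Fin 9 → ℝ) : Set (Fin 3 → ℂ) :=
  {y | (∀ a, amp6L a y ≠ 0) ∧
    ∀ k : Fin 3, ∑ a, (c a : ℂ) * (amp6Lin a k : ℂ) / amp6L a y = 0}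

/-- The toric Hessian `H_L(y) = (θᵢθⱼL(y))` with `θᵢ = yᵢ ∂/∂yᵢ`, as a rational
expression: `θᵢθⱼL = ∑ₐ cₐ dₐⱼ (δᵢⱼ yᵢ ℓₐ(y) - yᵢ yⱼ dₐᵢ) / ℓₐ(y)²`. -/
def amp6H (c : Fin 9 → ℝ) (y : Fin 3 → ℂ) : Matrix (Fin 3) (Fin 3) ℂ :=
  Matrix.of fun i j =>
    ∑ a, (c a : ℂ) * (amp6Lin a j : ℂ) *
      ((if i = j then y i * amp6L a y else 0) - y i * y j * (amp6Lin a i : ℂ)) /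
      (amp6L a y) ^ 2

/-!
Regard `xᵢ = (y₁ + ⋯ + yᵢ) / (1 + y₁ + y₂ + y₃)` as punctures on a sphere that also carries
punctures at `0`, `1` and `∞`. Critical points of `L` then become solutions of the scattering
equations, and at a solution `det H_L = -det N / PT²`, where `N` is the negated Hessian of the
scattering potential and `PT` the Parke–Taylor factor of the standard ordering.

For positive data all solutions are real, since the imaginary part of the scattering equation at a
puncture of maximal imaginary part has terms of one sign only. At a real solution `N` is strictly
diagonally dominant, so `det N ≠ 0`. Maximizing the Koba–Nielsen factor over each of the `3!`
orderings of the punctures in `(0, 1)` produces six solutions.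

There are no more because of KLT orthogonality. A matrix-tree expansion writes the determinant of a
kernel matrix attached to two solutions as the pairing of the Parke–Taylor vector of the first with
the numerator vector of the second, up to a nonzero factor. For distinct solutions an explicit
kernel vector makes the pairing vanish, and for equal ones it is `det N`. Hence the six-dimensional
Parke–Taylor vectors are linearly independent, and any vector can be expanded in them. The
sum over critical points of `PT² / det N` is thus the identity entry of the vector `m` with
`m ⬝ numerator = PT` at every solution. Such an `m` is the row of doubly ordered biadjoint scalar
amplitudes, whose identity entry is the sum over the fourteen planar trivalent trees.
-/

open Matrix Equiv Filter Topology

section Biorthogonal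

variable {X κ F : Type*} [Field F] [Fintype κ] {A C : X → κ → F}

theorem linearIndependent_of_biorthogonal (hne : ∀ x, A x ⬝ᵥ C x ≠ 0)
    (horth : Pairwise fun x y ↦ A x ⬝ᵥ C y = 0) : LinearIndependent F A := by
  classical
  refine linearIndependent_iff'.mpr fun s g hg i hi ↦ ?_
  have hpair : ∑ j ∈ s, g j * (A j ⬝ᵥ C i) = 0 := by
    simpa [sum_dotProduct, smul_dotProduct] using congrArg (· ⬝ᵥ C i) hg
  rw [Finset.sum_eq_single_of_mem i hi fun j _ hj ↦ by rw [horth hj, mul_zero]] at hpair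
  exact (mul_eq_zero.mp hpair).resolve_right (hne i)

theorem sum_dotProduct_mul_div_of_biorthogonal [Fintype X] (hcard : Fintype.card X = Fintype.card κ)
    (hne : ∀ x, A x ⬝ᵥ C x ≠ 0) (horth : Pairwise fun x y ↦ A x ⬝ᵥ C y = 0) (d : κ → F) (k : κ) :
    ∑ x, (d ⬝ᵥ C x) * A x k / (A x ⬝ᵥ C x) = d k := by
  classical
  let M : Matrix X κ F := of A
  let N : Matrix κ X F := of fun k x ↦ C x k / (A x ⬝ᵥ C x)
  have hMN : M * N = 1 := by
    ext x y
    have : (M * N) x y = (A x ⬝ᵥ C y) / (A y ⬝ᵥ C y) := by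
      simp [M, N, mul_apply, dotProduct, mul_div_assoc, Finset.sum_div]
    rw [this, one_apply]
    split_ifs with hxy
    · rw [hxy, div_self (hne y)]
    · rw [horth hxy, zero_div]
  have hNM : N * M = 1 := (mul_eq_one_comm_of_card_eq _ _ _ hcard).mp hMN
  calc ∑ x, (d ⬝ᵥ C x) * A x k / (A x ⬝ᵥ C x) = (d ᵥ* (N * M)) k := by
        rw [← vecMul_vecMul]
        simp only [vecMul, dotProduct, M, N, of_apply, Finset.sum_mul, Finset.sum_div]
        exact Finset.sum_congr rfl fun x _ ↦ Finset.sum_congr rfl fun l _ ↦ by ring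
    _ = d k := by rw [hNM, vecMul_one]

end Biorthogonal

section GroundedLaplacian

/-- The Laplacian of a weighted graph on `ι ∪ {0}`, grounded at the vertex `0`: `w i` is the weight
of the edge from `0` to `i` and `t i j` that of the edge from `i` to `j`. The diagonal entries
`t i i` cancel. -/
def groundedLaplacian {ι R : Type*} [Fintype ι] [DecidableEq ι] [Ring R] (w : ι → R)
    (t : ι → ι → R) : Matrix ι ι R :=
  diagonal (fun i ↦ w i + ∑ j, t i j) - of t

variable {ι R S : Type*} [Fintype ι] [DecidableEq ι]

theorem groundedLaplacian_apply [Ring R] (w : ι → R) (t : ι → ι → R) (i j : ι) :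
    groundedLaplacian w t i j = (if i = j then w i + ∑ l, t i l else 0) - t i j := by
  simp [groundedLaplacian, diagonal_apply]

theorem groundedLaplacian_mulVec [Ring R] (w : ι → R) (t : ι → ι → R) (f : ι → R) (i : ι) :
    (groundedLaplacian w t *ᵥ f) i = w i * f i + ∑ j, t i j * (f i - f j) := by
  rw [groundedLaplacian, sub_mulVec, Pi.sub_apply, mulVec_diagonal]
  simp only [mulVec, dotProduct, of_apply, mul_sub, Finset.sum_sub_distrib, add_mul, Finset.sum_mul]
  abel

theorem groundedLaplacian_map [Ring R] [Ring S] (f : R →+* S) (w : ι → R) (t : ι → ι → R) :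
    (groundedLaplacian w t).map f = groundedLaplacian (f ∘ w) fun i j ↦ f (t i j) := by
  ext i j
  simp only [map_apply, groundedLaplacian_apply, Function.comp_apply]
  split_ifs <;> simp

theorem det_groundedLaplacian_ne_zero {w : ι → ℝ} {t : ι → ι → ℝ} (hw : ∀ i, 0 < w i)
    (ht : Pairwise fun i j ↦ 0 ≤ t i j) : (groundedLaplacian w t).det ≠ 0 := by
  refine det_ne_zero_of_sum_row_lt_diag fun i ↦ ?_
  have hdiag : groundedLaplacian w t i i = w i + ∑ j ∈ Finset.univ.erase i, t i j := by
    rw [groundedLaplacian_apply, if_pos rfl, ← Finset.sum_erase_add _ _ (Finset.mem_univ i)]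
    ring
  have hoff : ∀ j ∈ Finset.univ.erase i, ‖groundedLaplacian w t i j‖ = t i j := fun j hj ↦ by
    have hij := (Finset.ne_of_mem_erase hj).symm
    rw [groundedLaplacian_apply, if_neg hij, zero_sub, norm_neg, Real.norm_of_nonneg (ht hij)]
  have hsum : 0 ≤ ∑ j ∈ Finset.univ.erase i, t i j :=
    Finset.sum_nonneg fun j hj ↦ ht (Finset.ne_of_mem_erase hj).symm
  rw [Finset.sum_congr rfl hoff, hdiag, Real.norm_of_nonneg (add_nonneg (hw i).le hsum)]
  exact lt_add_of_pos_left _ (hw i)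

end GroundedLaplacian

/-- Mandelstam invariants in the gauge where one puncture sits at `∞`, one at `0` and one at `1`,
and `ι` labels the remaining ones: `zero i` and `one i` couple the puncture `i` to `0` and to `1`,
and `pair i j` couples `i` to `j`. For six points, `ι = Fin 3` labels the punctures `3, 4, 5`,
while `2` and `6` sit at `0` and `1`. The entries `pair i i` play no role. -/
structure Mandelstam (ι F : Type*) where
  zero : ι → F
  one : ι → F
  pair : ι → ι → F
  pair_comm (i j : ι) : pair i j = pair j i

namespace Mandelstam

variable {ι κ F G : Type*}

/-- Positivity of all couplings, the kinematic regime in which all solutions of the scattering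
equations are real. -/
structure Positive (k : Mandelstam ι ℝ) : Prop where
  zero_pos (i : ι) : 0 < k.zero i
  one_pos (i : ι) : 0 < k.one i
  pair_pos : Pairwise fun i j ↦ 0 < k.pair i j

/-- Extension of scalars, used to regard real kinematic data as complex. -/
def map [Field F] [Field G] (f : F →+* G) (k : Mandelstam ι F) : Mandelstam ι G where
  zero i := f (k.zero i)
  one i := f (k.one i)
  pair i j := f (k.pair i j)
  pair_comm i j := by rw [k.pair_comm]

/-- Relabelling of the punctures, used to move the ordering of a solution to the identity. -/
def reindex (e : κ ≃ ι) (k : Mandelstam ι F) : Mandelstam κ F where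
  zero i := k.zero (e i)
  one i := k.one (e i)
  pair i j := k.pair (e i) (e j)
  pair_comm _ _ := k.pair_comm _ _

theorem Positive.reindex {k : Mandelstam ι ℝ} (hk : k.Positive) (e : κ ≃ ι) :
    (k.reindex e).Positive where
  zero_pos i := hk.zero_pos (e i)
  one_pos i := hk.one_pos (e i)
  pair_pos _ _ hij := hk.pair_pos (e.injective.ne hij)

section Configurations

variable [Field F] {x : ι → F}

/-- Points of the moduli space of punctured spheres: together with `0`, `1` and `∞`, the punctures
are pairwise distinct. -/
structure IsConfiguration (x : ι → F) : Prop where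
  ne_zero (i : ι) : x i ≠ 0
  ne_one (i : ι) : x i ≠ 1
  injective : Function.Injective x

theorem IsConfiguration.one_sub_ne_zero (h : IsConfiguration x) (i : ι) :
    1 - x i ≠ 0 :=
  sub_ne_zero.mpr (h.ne_one i).symm

theorem IsConfiguration.sub_ne_zero (h : IsConfiguration x) {i j : ι} (hij : i ≠ j) :
    x i - x j ≠ 0 :=
  _root_.sub_ne_zero.mpr (h.injective.ne hij)

theorem div_one_sub_sub_div_one_sub {a b : F} (ha : 1 - a ≠ 0) (hb : 1 - b ≠ 0) :
    a / (1 - a) - b / (1 - b) = (a - b) / ((1 - a) * (1 - b)) := by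
  field_simp
  ring

theorem IsConfiguration.div_sub_div_div_one_sub_sub (h : IsConfiguration x) (a : F) (i j : ι) :
    a / (x i - x j) / (x i / (1 - x i) - x j / (1 - x j)) =
      (1 - x i) * (1 - x j) * (a / (x i - x j) ^ 2) := by
  obtain rfl | hij := eq_or_ne i j
  · simp
  have := h.sub_ne_zero hij
  have hi := h.one_sub_ne_zero i; have hj := h.one_sub_ne_zero j
  rw [div_one_sub_sub_div_one_sub hi hj]
  field_simp

end Configurations

section ScatteringEquations

variable [Fintype ι] [Fintype κ] [Field F] [Field G]

/-- The `i`-th scattering function, that is `∂/∂xᵢ` of the scattering potential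
`∑ zero i * log xᵢ + ∑ one i * log (1 - xᵢ) + ∑_{i<j} pair i j * log (xⱼ - xᵢ)`.
The summand `j = i` vanishes because `a / 0 = 0`. -/
def scatter (k : Mandelstam ι F) (x : ι → F) (i : ι) : F :=
  k.zero i / x i + ∑ j, k.pair i j / (x i - x j) - k.one i / (1 - x i)

/-- Solutions of the scattering equations, the critical points of the scattering potential. -/
structure IsSolution (k : Mandelstam ι F) (x : ι → F) : Prop extends IsConfiguration x where
  scatter_eq_zero (i : ι) : k.scatter x i = 0

theorem map_scatter (f : F →+* G) (k : Mandelstam ι F) (x : ι → F) (i : ι) :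
    (k.map f).scatter (f ∘ x) i = f (k.scatter x i) := by
  simp [scatter, map]

theorem reindex_scatter (e : κ ≃ ι) (k : Mandelstam ι F) (x : ι → F) (i : κ) :
    (k.reindex e).scatter (x ∘ e) i = k.scatter x (e i) := by
  simp only [scatter, reindex, Function.comp_apply]
  rw [e.sum_comp fun j ↦ k.pair (e i) j / (x (e i) - x j)]

namespace IsSolution

variable {k : Mandelstam ι F} {x : ι → F}

theorem map (h : k.IsSolution x) (f : F →+* G) : (k.map f).IsSolution (f ∘ x) where
  ne_zero i := (map_ne_zero f).mpr (h.ne_zero i)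
  ne_one i := (map_ne_one_iff f f.injective).mpr (h.ne_one i)
  injective := f.injective.comp h.injective
  scatter_eq_zero i := by rw [map_scatter, h.scatter_eq_zero, map_zero]

theorem of_reindex {e : κ ≃ ι} (h : (k.reindex e).IsSolution (x ∘ e)) : k.IsSolution x where
  ne_zero i := by simpa using h.ne_zero (e.symm i)
  ne_one i := by simpa using h.ne_one (e.symm i)
  injective := e.injective_comp x |>.mp h.injective
  scatter_eq_zero i := by simpa [reindex_scatter] using h.scatter_eq_zero (e.symm i)

end IsSolution

end ScatteringEquations

section Klt

variable [Fintype ι] [DecidableEq ι] [Field F] [Field G]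

/-- The negated Hessian matrix `-∂²/∂xᵢ∂xⱼ` of the scattering potential. -/
def negHessian (k : Mandelstam ι F) (x : ι → F) : Matrix ι ι F :=
  groundedLaplacian (fun i ↦ k.zero i / x i ^ 2 + k.one i / (1 - x i) ^ 2)
    fun i j ↦ k.pair i j / (x i - x j) ^ 2

theorem map_negHessian (f : F →+* G) (k : Mandelstam ι F) (x : ι → F) :
    (k.map f).negHessian (f ∘ x) = (k.negHessian x).map f := by
  rw [negHessian, negHessian, groundedLaplacian_map]
  congr <;> ext <;> simp [map]

theorem Positive.det_negHessian_ne_zero {k : Mandelstam ι ℝ} (hk : k.Positive) {x : ι → ℝ}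
    (hx : ∀ i, x i ≠ 0) : (k.negHessian x).det ≠ 0 :=
  det_groundedLaplacian_ne_zero
    (fun i ↦ add_pos_of_pos_of_nonneg (div_pos (hk.zero_pos i) (sq_pos_of_ne_zero (hx i)))
      (div_nonneg (hk.one_pos i).le (sq_nonneg _)))
    fun _ _ hij ↦ div_nonneg (hk.pair_pos hij).le (sq_nonneg _)

/-- The bilinear pairing of two configurations whose determinant realises KLT orthogonality.
The first one enters through the Möbius transform `xᵢ / (1 - xᵢ)`, which moves the puncture at `1`
to `∞`. -/
def kltKernel (k : Mandelstam ι F) (x y : ι → F) : Matrix ι ι F :=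
  groundedLaplacian (fun i ↦ k.zero i / y i / (x i / (1 - x i)))
    fun i j ↦ k.pair i j / (y i - y j) / (x i / (1 - x i) - x j / (1 - x j))

theorem kltKernel_mulVec {k : Mandelstam ι F} {x y : ι → F} (hx : k.IsSolution x)
    (hy : k.IsSolution y) : k.kltKernel x y *ᵥ (fun i ↦ (x i - y i) / (1 - x i)) = 0 := by
  ext i
  have hzero : k.zero i / y i / (x i / (1 - x i)) * ((x i - y i) / (1 - x i)) =
      (1 - y i) * (k.zero i / y i) - (1 - x i) * (k.zero i / x i) := by
    have := hx.ne_zero i; have := hy.ne_zero i; have := hx.one_sub_ne_zero i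
    field_simp
    ring
  have hpair : ∀ j, k.pair i j / (y i - y j) / (x i / (1 - x i) - x j / (1 - x j)) *
      ((x i - y i) / (1 - x i) - (x j - y j) / (1 - x j)) =
      (1 - y i) * (k.pair i j / (y i - y j)) - (1 - x i) * (k.pair i j / (x i - x j)) := by
    intro j
    obtain rfl | hij := eq_or_ne i j
    · simp
    have := hx.sub_ne_zero hij; have := hy.sub_ne_zero hij
    have hi := hx.one_sub_ne_zero i; have hj := hx.one_sub_ne_zero j
    rw [div_one_sub_sub_div_one_sub hi hj]
    field_simp
    ring
  have hone : ∀ {z : ι → F}, k.IsSolution z → (1 - z i) * (k.one i / (1 - z i)) = k.one i :=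
    fun hz ↦ mul_div_cancel₀ _ (hz.one_sub_ne_zero i)
  calc (k.kltKernel x y *ᵥ fun i ↦ (x i - y i) / (1 - x i)) i
      = (1 - y i) * k.scatter y i - (1 - x i) * k.scatter x i := by
        simp only [kltKernel, groundedLaplacian_mulVec, hzero, hpair, Finset.sum_sub_distrib,
          ← Finset.mul_sum, scatter]
        linear_combination hone hy - hone hx
    _ = 0 := by rw [hx.scatter_eq_zero, hy.scatter_eq_zero, mul_zero, mul_zero, sub_zero]

theorem det_kltKernel_eq_zero {k : Mandelstam ι F} {x y : ι → F} (hx : k.IsSolution x)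
    (hy : k.IsSolution y) (hxy : x ≠ y) : (k.kltKernel x y).det = 0 := by
  refine exists_mulVec_eq_zero_iff.mp ⟨_, fun h ↦ hxy ?_, kltKernel_mulVec hx hy⟩
  ext i
  simpa [hx.one_sub_ne_zero i, sub_eq_zero] using congrFun h i

theorem kltKernel_self {k : Mandelstam ι F} {x : ι → F} (h : k.IsSolution x) :
    k.kltKernel x x =
      diagonal (fun i ↦ 1 - x i) * k.negHessian x * diagonal fun i ↦ 1 - x i := by
  ext i j
  rw [mul_diagonal, diagonal_mul, kltKernel, negHessian, groundedLaplacian_apply,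
    groundedLaplacian_apply]
  simp only [h.div_sub_div_div_one_sub_sub]
  split_ifs with hij
  · subst hij
    have hrow : ∑ l, (1 - x i) * (1 - x l) * (k.pair i l / (x i - x l) ^ 2) =
        (1 - x i) ^ 2 * ∑ l, k.pair i l / (x i - x l) ^ 2 +
          (1 - x i) * ∑ l, k.pair i l / (x i - x l) := by
      simp only [Finset.mul_sum, ← Finset.sum_add_distrib]
      refine Finset.sum_congr rfl fun l _ ↦ ?_
      obtain rfl | hil := eq_or_ne i l
      · simp
      have := h.sub_ne_zero hil
      field_simp
      ring
    have hzero : k.zero i / x i / (x i / (1 - x i)) =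
        (1 - x i) ^ 2 * (k.zero i / x i ^ 2) + (1 - x i) * (k.zero i / x i) := by
      have := h.ne_zero i; have := h.one_sub_ne_zero i
      field_simp
      ring
    have hone : (1 - x i) ^ 2 * (k.one i / (1 - x i) ^ 2) = (1 - x i) * (k.one i / (1 - x i)) := by
      have := h.one_sub_ne_zero i
      field_simp
    have hscatter := h.scatter_eq_zero i
    rw [scatter] at hscatter
    rw [hrow, hzero]
    linear_combination (1 - x i) * hscatter - hone
  · ring

theorem det_kltKernel_self {k : Mandelstam ι F} {x : ι → F} (h : k.IsSolution x) :
    (k.kltKernel x x).det = (∏ i, (1 - x i)) ^ 2 * (k.negHessian x).det := by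
  rw [kltKernel_self h, det_mul, det_mul, det_diagonal]
  ring

end Klt

section Reality

theorem ofReal_div_im (s : ℝ) (z : ℂ) : ((s : ℂ) / z).im = -(s * z.im / Complex.normSq z) := by
  rw [Complex.div_im, Complex.ofReal_im, Complex.ofReal_re, zero_mul, zero_div, zero_sub]

theorem map_ofReal_map_conj (k : Mandelstam ι ℝ) :
    (k.map Complex.ofRealHom).map (starRingEnd ℂ) = k.map Complex.ofRealHom := by
  simp [map]

variable [Fintype ι]

theorem Positive.im_nonpos {k : Mandelstam ι ℝ} (hk : k.Positive) {x : ι → ℂ}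
    (hx : (k.map Complex.ofRealHom).IsSolution x) (i : ι) : (x i).im ≤ 0 := by
  obtain ⟨m, -, hm⟩ := Finset.exists_max_image Finset.univ (fun j ↦ (x j).im) ⟨i, Finset.mem_univ i⟩
  refine (hm i (Finset.mem_univ i)).trans (not_lt.mp fun hpos ↦ ?_)
  have hzero : 0 < k.zero m * (x m).im / Complex.normSq (x m) :=
    div_pos (mul_pos (hk.zero_pos m) hpos) (Complex.normSq_pos.mpr (hx.ne_zero m))
  have hone : 0 ≤ k.one m * (x m).im / Complex.normSq (1 - x m) :=
    div_nonneg (mul_pos (hk.one_pos m) hpos).le (Complex.normSq_nonneg _)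
  have hpair : 0 ≤ ∑ j, k.pair m j * (x m - x j).im / Complex.normSq (x m - x j) := by
    refine Finset.sum_nonneg fun j _ ↦ ?_
    obtain rfl | hmj := eq_or_ne m j
    · simp
    · exact div_nonneg (mul_nonneg (hk.pair_pos hmj).le (sub_nonneg.mpr (hm j (Finset.mem_univ j))))
        (Complex.normSq_nonneg _)
  have him := congrArg Complex.im (hx.scatter_eq_zero m)
  simp only [scatter, map, Complex.ofRealHom_eq_coe, Complex.sub_im, Complex.add_im,
    Complex.im_sum, ofReal_div_im, Complex.one_im, Complex.zero_im, Finset.sum_neg_distrib,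
    zero_sub, mul_neg, neg_div, neg_neg] at him hpair
  linarith

theorem Positive.exists_eq_ofReal_comp {k : Mandelstam ι ℝ} (hk : k.Positive) {x : ι → ℂ}
    (hx : (k.map Complex.ofRealHom).IsSolution x) : ∃ r : ι → ℝ, x = Complex.ofRealHom ∘ r := by
  refine ⟨fun i ↦ (x i).re, funext fun i ↦ Complex.ext rfl ?_⟩
  have hconj : 0 ≤ (x i).im :=
    neg_nonpos.mp (hk.im_nonpos (k.map_ofReal_map_conj ▸ hx.map (starRingEnd ℂ)) i)
  exact (hk.im_nonpos hx i).antisymm hconj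

theorem Positive.det_map_negHessian_ne_zero [DecidableEq ι] {k : Mandelstam ι ℝ} (hk : k.Positive)
    {x : ι → ℂ} (hx : (k.map Complex.ofRealHom).IsSolution x) :
    ((k.map Complex.ofRealHom).negHessian x).det ≠ 0 := by
  obtain ⟨r, rfl⟩ := hk.exists_eq_ofReal_comp hx
  rw [map_negHessian, ← RingHom.mapMatrix_apply, ← RingHom.map_det, map_ne_zero]
  exact hk.det_negHessian_ne_zero fun i ↦ (map_ne_zero Complex.ofRealHom).mp (hx.ne_zero i)

end Reality

section Existence

variable [Fintype ι]

/-- The Koba–Nielsen factor, the integrand of the string integral in this gauge. Every pair of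
punctures occurs twice in the product over ordered pairs, hence the exponent `pair i j / 2`. -/
def kobaNielsen (k : Mandelstam ι ℝ) (x : ι → ℝ) : ℝ :=
  (∏ i, |x i| ^ k.zero i * |1 - x i| ^ k.one i) *
    ∏ p ∈ Finset.univ.offDiag, |x p.1 - x p.2| ^ (k.pair p.1 p.2 / 2)

theorem Positive.continuous_kobaNielsen {k : Mandelstam ι ℝ} (hk : k.Positive) :
    Continuous k.kobaNielsen := by
  refine (continuous_finsetProd _ fun i _ ↦ ?_).mul (continuous_finsetProd _ fun p hp ↦ ?_)
  · exact ((continuous_apply i).abs.rpow_const fun _ ↦ .inr (hk.zero_pos i).le).mul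
      ((continuous_const.sub (continuous_apply i)).abs.rpow_const fun _ ↦ .inr (hk.one_pos i).le)
  · exact ((continuous_apply p.1).sub (continuous_apply p.2)).abs.rpow_const fun _ ↦
      .inr (half_pos (hk.pair_pos (Finset.mem_offDiag.mp hp).2.2)).le

theorem kobaNielsen_nonneg (k : Mandelstam ι ℝ) (x : ι → ℝ) : 0 ≤ k.kobaNielsen x := by
  unfold kobaNielsen
  positivity

theorem Positive.kobaNielsen_ne_zero_iff {k : Mandelstam ι ℝ} (hk : k.Positive) {x : ι → ℝ} :
    k.kobaNielsen x ≠ 0 ↔ IsConfiguration x := by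
  have hconf : IsConfiguration x ↔ (∀ i, x i ≠ 0 ∧ x i ≠ 1) ∧ Function.Injective x :=
    ⟨fun h ↦ ⟨fun i ↦ ⟨h.ne_zero i, h.ne_one i⟩, h.injective⟩,
      fun h ↦ ⟨fun i ↦ (h.1 i).1, fun i ↦ (h.1 i).2, h.2⟩⟩
  rw [hconf, kobaNielsen, mul_ne_zero_iff, Finset.prod_ne_zero_iff, Finset.prod_ne_zero_iff]
  refine and_congr (forall_congr' fun i ↦ ?_) ⟨fun h i j hij ↦ ?_, fun h p hp ↦ ?_⟩
  · rw [mul_ne_zero_iff, Real.rpow_ne_zero (abs_nonneg _) (hk.zero_pos i).ne',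
      Real.rpow_ne_zero (abs_nonneg _) (hk.one_pos i).ne', abs_ne_zero, abs_ne_zero, sub_ne_zero,
      ne_comm (a := 1), imp_iff_right (Finset.mem_univ i)]
  · by_contra hne
    refine h (i, j) (by simpa using hne) ?_
    rw [hij, sub_self, abs_zero, Real.zero_rpow (half_pos (hk.pair_pos hne)).ne']
  · have hne := (Finset.mem_offDiag.mp hp).2.2
    exact (Real.rpow_pos_of_pos (abs_pos.mpr (sub_ne_zero.mpr (h.ne hne))) _).ne'

theorem log_kobaNielsen (k : Mandelstam ι ℝ) {x : ι → ℝ} (hx : IsConfiguration x) :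
    Real.log (k.kobaNielsen x) =
      ∑ i, (k.zero i * Real.log (x i) + k.one i * Real.log (1 - x i)) +
        ∑ p ∈ Finset.univ.offDiag, k.pair p.1 p.2 / 2 * Real.log (x p.1 - x p.2) := by
  have hzero : ∀ i, |x i| ^ k.zero i ≠ 0 := fun i ↦
    (Real.rpow_pos_of_pos (abs_pos.mpr (hx.ne_zero i)) _).ne'
  have hone : ∀ i, |1 - x i| ^ k.one i ≠ 0 := fun i ↦
    (Real.rpow_pos_of_pos (abs_pos.mpr (hx.one_sub_ne_zero i)) _).ne'
  have habs : ∀ p ∈ Finset.univ.offDiag, 0 < |x p.1 - x p.2| := fun p hp ↦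
    abs_pos.mpr (hx.sub_ne_zero (Finset.mem_offDiag.mp hp).2.2)
  have hpair : ∀ p ∈ Finset.univ.offDiag, |x p.1 - x p.2| ^ (k.pair p.1 p.2 / 2) ≠ 0 := fun p hp ↦
    (Real.rpow_pos_of_pos (habs p hp) _).ne'
  rw [kobaNielsen,
    Real.log_mul (Finset.prod_ne_zero_iff.mpr fun i _ ↦ mul_ne_zero (hzero i) (hone i))
      (Finset.prod_ne_zero_iff.mpr hpair), Real.log_prod fun i _ ↦ mul_ne_zero (hzero i) (hone i),
    Real.log_prod hpair]
  congr 1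
  · refine Finset.sum_congr rfl fun i _ ↦ ?_
    rw [Real.log_mul (hzero i) (hone i), Real.log_rpow (abs_pos.mpr (hx.ne_zero i)),
      Real.log_rpow (abs_pos.mpr (hx.one_sub_ne_zero i)), Real.log_abs, Real.log_abs]
  · exact Finset.sum_congr rfl fun p hp ↦ by rw [Real.log_rpow (habs p hp), Real.log_abs]

theorem sum_offDiag_pair_mul_single [DecidableEq ι] (k : Mandelstam ι ℝ) (x : ι → ℝ) (i : ι) :
    ∑ p ∈ Finset.univ.offDiag, k.pair p.1 p.2 / 2 *
      (((Pi.single i 1 : ι → ℝ) p.1 - (Pi.single i 1 : ι → ℝ) p.2) / (x p.1 - x p.2)) =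
      ∑ j, k.pair i j / (x i - x j) := by
  have hsplit : ∀ a b, k.pair a b / 2 *
      (((Pi.single i 1 : ι → ℝ) a - (Pi.single i 1 : ι → ℝ) b) / (x a - x b)) =
      (if a = i then k.pair i b / 2 / (x i - x b) else 0) +
        if b = i then k.pair i a / 2 / (x i - x a) else 0 := by
    intro a b
    have hneg : k.pair i a / 2 / (x i - x a) = -(k.pair i a / 2 / (x a - x i)) := by
      rw [← neg_sub (x a), div_neg]
    simp only [Pi.single_apply, hneg]
    split_ifs with ha hb hb
    · simp [ha, hb]
    · rw [ha]; ring
    · rw [hb, k.pair_comm a]; ring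
    · simp
  rw [Finset.sum_subset (Finset.subset_univ _) fun p _ hp ↦ by
    have : p.1 = p.2 := by simpa using hp
    rw [this, sub_self, zero_div, mul_zero], Fintype.sum_prod_type]
  have hleft : ∑ a, ∑ b, (if a = i then k.pair i b / 2 / (x i - x b) else 0) =
      ∑ j, k.pair i j / 2 / (x i - x j) := by
    rw [Finset.sum_comm]
    simp
  have hright : ∑ a, ∑ b, (if b = i then k.pair i a / 2 / (x i - x a) else 0) =
      ∑ j, k.pair i j / 2 / (x i - x j) := by
    simp
  simp_rw [hsplit, Finset.sum_add_distrib]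
  rw [hleft, hright, ← Finset.sum_add_distrib]
  exact Finset.sum_congr rfl fun j _ ↦ by ring

theorem hasDerivAt_log_kobaNielsen_update [DecidableEq ι] (k : Mandelstam ι ℝ) {x : ι → ℝ}
    (hx : IsConfiguration x) (i : ι) :
    HasDerivAt (fun t ↦
      ∑ j, (k.zero j * Real.log (Function.update x i t j) +
        k.one j * Real.log (1 - Function.update x i t j)) +
      ∑ p ∈ Finset.univ.offDiag, k.pair p.1 p.2 / 2 *
        Real.log (Function.update x i t p.1 - Function.update x i t p.2))
      (k.scatter x i) (x i) := by
  have hupd : ∀ j, HasDerivAt (fun t ↦ Function.update x i t j) ((Pi.single i 1 : ι → ℝ) j) (x i) :=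
    hasDerivAt_pi.mp (hasDerivAt_update x i (x i))
  have hself : ∀ j, Function.update x i (x i) j = x j := fun j ↦ by rw [Function.update_eq_self]
  have hzero : ∀ j, HasDerivAt (fun t ↦ k.zero j * Real.log (Function.update x i t j))
      (k.zero j * ((Pi.single i 1 : ι → ℝ) j / x j)) (x i) := fun j ↦ by
    simpa only [hself] using ((hupd j).log (by rw [hself]; exact hx.ne_zero j)).const_mul (k.zero j)
  have hone : ∀ j, HasDerivAt (fun t ↦ k.one j * Real.log (1 - Function.update x i t j))
      (k.one j * (-(Pi.single i 1 : ι → ℝ) j / (1 - x j))) (x i) := fun j ↦ by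
    simpa only [hself] using (((hupd j).const_sub 1).log
      (by rw [hself]; exact hx.one_sub_ne_zero j)).const_mul (k.one j)
  have hpair : ∀ p ∈ Finset.univ.offDiag, HasDerivAt (fun t ↦ k.pair p.1 p.2 / 2 *
      Real.log (Function.update x i t p.1 - Function.update x i t p.2))
      (k.pair p.1 p.2 / 2 * (((Pi.single i 1 : ι → ℝ) p.1 - (Pi.single i 1 : ι → ℝ) p.2) /
        (x p.1 - x p.2))) (x i) := fun p hp ↦ by
    have hne : x p.1 - x p.2 ≠ 0 := hx.sub_ne_zero (Finset.mem_offDiag.mp hp).2.2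
    simpa only [hself] using (((hupd p.1).fun_sub (hupd p.2)).log (by
      simpa only [hself] using hne)).const_mul (k.pair p.1 p.2 / 2)
  refine ((HasDerivAt.fun_sum fun j _ ↦ (hzero j).add (hone j)).add
    (HasDerivAt.fun_sum hpair)).congr_deriv ?_
  rw [sum_offDiag_pair_mul_single, scatter]
  simp only [Pi.single_apply, div_eq_mul_inv, ite_mul, one_mul, zero_mul, mul_ite, mul_zero,
    neg_mul, mul_neg, Finset.sum_add_distrib, Finset.sum_ite_eq', Finset.mem_univ, ↓reduceIte,
    Finset.sum_neg_distrib]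
  ring

theorem Positive.isSolution_of_isLocalMax {k : Mandelstam ι ℝ} (hk : k.Positive) {x : ι → ℝ}
    (hpos : k.kobaNielsen x ≠ 0) (hmax : IsLocalMax k.kobaNielsen x) : k.IsSolution x := by
  classical
  have hx := hk.kobaNielsen_ne_zero_iff.mp hpos
  refine ⟨hx, fun i ↦ ?_⟩
  have hcont : Tendsto (Function.update x i) (𝓝 (x i)) (𝓝 x) := by
    have h : Continuous (Function.update x i) := continuous_const.update i continuous_id
    simpa only [Function.update_eq_self] using h.tendsto (x i)
  refine IsLocalMax.hasDerivAt_eq_zero ?_ (k.hasDerivAt_log_kobaNielsen_update hx i)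
  filter_upwards [hcont.eventually hmax,
    hcont.eventually (hk.continuous_kobaNielsen.continuousAt.eventually_ne hpos)] with t hle hne
  rw [← k.log_kobaNielsen (hk.kobaNielsen_ne_zero_iff.mp hne), Function.update_eq_self,
    ← k.log_kobaNielsen hx]
  exact Real.log_le_log ((k.kobaNielsen_nonneg _).lt_of_ne' hne) hle

end Existence

section Chambers

variable {n : ℕ}

theorem isOpen_setOf_strictMono_Ioo :
    IsOpen {x : Fin n → ℝ | StrictMono x ∧ ∀ i, x i ∈ Set.Ioo 0 1} := by
  simp only [StrictMono, Set.mem_Ioo, Set.ofPred_and, Set.ofPred_forall]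
  refine .inter (isOpen_iInter_of_finite fun i ↦ isOpen_iInter_of_finite fun j ↦
    isOpen_iInter_of_finite fun _ ↦ isOpen_lt (continuous_apply i) (continuous_apply j))
    (isOpen_iInter_of_finite fun i ↦ .inter ?_ ?_)
  · exact isOpen_lt continuous_const (continuous_apply i)
  · exact isOpen_lt (continuous_apply i) continuous_const

theorem isCompact_setOf_monotone_Icc : IsCompact {x : Fin n → ℝ | Monotone x ∧ x ∈ Set.Icc 0 1} :=
  isCompact_Icc.inter_left isClosed_monotone

theorem exists_strictMono_mem_Ioo (n : ℕ) :
    ∃ x : Fin n → ℝ, StrictMono x ∧ ∀ i, x i ∈ Set.Ioo (0 : ℝ) 1 := by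
  refine ⟨fun i ↦ (i + 1) / (n + 1), fun i j hij ↦ ?_, fun i ↦ ⟨by positivity, ?_⟩⟩
  · have : (i : ℝ) < j := by exact_mod_cast hij
    dsimp only
    gcongr
  · rw [div_lt_one (by positivity)]
    exact_mod_cast Nat.succ_lt_succ i.isLt

theorem Positive.exists_strictMono_isSolution {k : Mandelstam (Fin n) ℝ} (hk : k.Positive) :
    ∃ x, k.IsSolution x ∧ StrictMono x := by
  obtain ⟨p, hp, hp01⟩ := exists_strictMono_mem_Ioo n
  have hpK : p ∈ {x : Fin n → ℝ | Monotone x ∧ x ∈ Set.Icc 0 1} :=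
    ⟨hp.monotone, fun i ↦ (hp01 i).1.le, fun i ↦ (hp01 i).2.le⟩
  obtain ⟨x, ⟨hmono, h0, h1⟩, hmax⟩ := isCompact_setOf_monotone_Icc.exists_isMaxOn ⟨p, hpK⟩
    hk.continuous_kobaNielsen.continuousOn
  have hne : k.kobaNielsen x ≠ 0 := by
    have : k.kobaNielsen p ≠ 0 := hk.kobaNielsen_ne_zero_iff.mpr
      ⟨fun i ↦ (hp01 i).1.ne', fun i ↦ (hp01 i).2.ne, hp.injective⟩
    exact (((k.kobaNielsen_nonneg p).lt_of_ne' this).trans_le (hmax hpK)).ne'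
  have hx := hk.kobaNielsen_ne_zero_iff.mp hne
  have hxU : StrictMono x ∧ ∀ i, x i ∈ Set.Ioo (0 : ℝ) 1 :=
    ⟨hmono.strictMono_of_injective hx.injective, fun i ↦
      ⟨(h0 i).lt_of_ne' (hx.ne_zero i), (h1 i).lt_of_ne (hx.ne_one i)⟩⟩
  refine ⟨x, hk.isSolution_of_isLocalMax hne ?_, hxU.1⟩
  exact hmax.isLocalMax (Filter.mem_of_superset (isOpen_setOf_strictMono_Ioo.mem_nhds hxU)
    fun y hy ↦ ⟨hy.1.monotone, fun i ↦ (hy.2 i).1.le, fun i ↦ (hy.2 i).2.le⟩)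

theorem Positive.exists_isSolution_strictMono_comp {k : Mandelstam (Fin n) ℝ} (hk : k.Positive)
    (π : Perm (Fin n)) : ∃ x, k.IsSolution x ∧ StrictMono (x ∘ π) := by
  obtain ⟨z, hz, hmono⟩ := (hk.reindex π).exists_strictMono_isSolution
  have hcomp : (z ∘ π.symm) ∘ π = z := by ext; simp
  exact ⟨z ∘ π.symm, .of_reindex (hcomp.symm ▸ hz), hcomp.symm ▸ hmono⟩

theorem Positive.exists_injective_isSolution {k : Mandelstam (Fin n) ℝ} (hk : k.Positive) :
    ∃ x : Perm (Fin n) → Fin n → ℝ, Function.Injective x ∧ ∀ π, k.IsSolution (x π) := by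
  choose x hx hmono using hk.exists_isSolution_strictMono_comp
  refine ⟨x, fun π σ h ↦ Equiv.ext fun i ↦ (hx π).injective ?_, hx⟩
  exact congrFun (Tuple.unique_monotone (hmono π).monotone (h ▸ (hmono σ).monotone)) i

end Chambers

section Orderings

variable [Field F] {k : Mandelstam (Fin 3) F} {x y : Fin 3 → F}

theorem sum_perm_fin_three (f : Perm (Fin 3) → F) :
    ∑ β, f β = f 1 + f (swap 0 1) + f (swap 1 2) + f (swap 0 1 * swap 1 2) +
      f (swap 1 2 * swap 0 1) + f (swap 0 2) := by
  have huniv : (Finset.univ : Finset (Perm (Fin 3))) = {1, swap 0 1, swap 1 2, swap 0 1 * swap 1 2,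
      swap 1 2 * swap 0 1, swap 0 2} := by decide
  rw [huniv, Finset.sum_insert (by decide), Finset.sum_insert (by decide),
    Finset.sum_insert (by decide), Finset.sum_insert (by decide), Finset.sum_insert (by decide),
    Finset.sum_singleton]
  ring

/-- The Parke–Taylor factor of the ordering `0, x (β 0), x (β 1), x (β 2), 1, ∞` of the
punctures. -/
def parkeTaylor (x : Fin 3 → F) (β : Perm (Fin 3)) : F :=
  1 / (x (β 0) * (x (β 1) - x (β 0)) * (x (β 2) - x (β 1)) * (1 - x (β 2)))

theorem IsConfiguration.parkeTaylor_ne_zero (hx : IsConfiguration x) (β : Perm (Fin 3)) :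
    parkeTaylor x β ≠ 0 :=
  one_div_ne_zero <| mul_ne_zero (mul_ne_zero (mul_ne_zero (hx.ne_zero _)
    (hx.sub_ne_zero (β.injective.ne (by decide)))) (hx.sub_ne_zero (β.injective.ne (by decide))))
    (hx.one_sub_ne_zero _)

/-- The product over the positions in the ordering `β` of the total coupling of that position
to the root and to its predecessors. -/
def chain (w : Fin 3 → F) (t : Fin 3 → Fin 3 → F) (β : Perm (Fin 3)) : F :=
  w (β 0) * (w (β 1) + t (β 1) (β 0)) * (w (β 2) + t (β 2) (β 0) + t (β 2) (β 1))

/-- The KLT numerator, dual to the Parke–Taylor factor under the pairing `kltKernel`. -/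
def numerator (k : Mandelstam (Fin 3) F) (x : Fin 3 → F) : Perm (Fin 3) → F :=
  chain (fun i ↦ k.zero i / x i) fun i j ↦ k.pair i j / (x i - x j)

theorem det_groundedLaplacian_div {w z : Fin 3 → F} {t : Fin 3 → Fin 3 → F} (hz : ∀ i, z i ≠ 0)
    (hinj : Function.Injective z) (ht : ∀ i j, t j i = -t i j) :
    (groundedLaplacian (fun i ↦ w i / z i) fun i j ↦ t i j / (z i - z j)).det =
      ∑ β : Perm (Fin 3),
        chain w t β / (z (β 0) * (z (β 1) - z (β 0)) * (z (β 2) - z (β 1))) := by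
  have h01 : z 1 - z 0 ≠ 0 := sub_ne_zero.mpr (hinj.ne (by decide))
  have h02 : z 2 - z 0 ≠ 0 := sub_ne_zero.mpr (hinj.ne (by decide))
  have h12 : z 2 - z 1 ≠ 0 := sub_ne_zero.mpr (hinj.ne (by decide))
  have := hz 0; have := hz 1; have := hz 2
  rw [sum_perm_fin_three, det_fin_three]
  simp only [groundedLaplacian_apply, chain, Fin.sum_univ_three, ht 0 1, ht 0 2, ht 1 2,
    ↓reduceIte, Fin.isValue, Fin.reduceEq, zero_ne_one, one_ne_zero, Perm.coe_one, id_eq,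
    Perm.coe_mul, Function.comp_apply, swap_apply_left, swap_apply_right, swap_apply_def,
    sub_self, div_zero, zero_add, add_zero, sub_zero, zero_sub, mul_neg, neg_mul, neg_neg]
  rw [← neg_sub (z 1) (z 0), ← neg_sub (z 2) (z 0), ← neg_sub (z 2) (z 1)]
  generalize hp : z 1 - z 0 = p at *
  generalize hq : z 2 - z 0 = q at *
  generalize hr : z 2 - z 1 = r at *
  field_simp
  rw [← hp, ← hq, ← hr]
  ring

theorem IsSolution.det_kltKernel (hx : k.IsSolution x) :
    (k.kltKernel x y).det = (∏ i, (1 - x i)) ^ 2 * (parkeTaylor x ⬝ᵥ k.numerator y) := by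
  have hinj : Function.Injective fun i ↦ x i / (1 - x i) := fun i j hij ↦ by
    by_contra hne
    have hsub := sub_eq_zero.mpr hij
    rw [div_one_sub_sub_div_one_sub (hx.one_sub_ne_zero i) (hx.one_sub_ne_zero j)] at hsub
    exact div_ne_zero (hx.sub_ne_zero hne)
      (mul_ne_zero (hx.one_sub_ne_zero i) (hx.one_sub_ne_zero j)) hsub
  have hanti : ∀ i j, k.pair j i / (y j - y i) = -(k.pair i j / (y i - y j)) := fun i j ↦ by
    rw [k.pair_comm, ← neg_sub, div_neg]
  rw [kltKernel, det_groundedLaplacian_div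
    (fun i ↦ div_ne_zero (hx.ne_zero i) (hx.one_sub_ne_zero i)) hinj hanti, dotProduct,
    Finset.mul_sum]
  refine Finset.sum_congr rfl fun β _ ↦ ?_
  have h0 := hx.ne_zero (β 0)
  have h01 := hx.sub_ne_zero (β.injective.ne (show (1 : Fin 3) ≠ 0 by decide))
  have h12 := hx.sub_ne_zero (β.injective.ne (show (2 : Fin 3) ≠ 1 by decide))
  have h0' := hx.one_sub_ne_zero (β 0)
  have h1' := hx.one_sub_ne_zero (β 1)
  have h2' := hx.one_sub_ne_zero (β 2)
  rw [← Equiv.prod_comp β, Fin.prod_univ_three, div_one_sub_sub_div_one_sub h1' h0',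
    div_one_sub_sub_div_one_sub h2' h1', numerator, parkeTaylor]
  field_simp

theorem IsSolution.parkeTaylor_dotProduct_numerator_eq_zero (hx : k.IsSolution x)
    (hy : k.IsSolution y) (hxy : x ≠ y) : parkeTaylor x ⬝ᵥ k.numerator y = 0 := by
  have h := hx.det_kltKernel (y := y)
  rw [det_kltKernel_eq_zero hx hy hxy] at h
  exact (mul_eq_zero.mp h.symm).resolve_left
    (pow_ne_zero 2 (Finset.prod_ne_zero_iff.mpr fun i _ ↦ hx.one_sub_ne_zero i))

theorem IsSolution.parkeTaylor_dotProduct_numerator_self (hx : k.IsSolution x) :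
    parkeTaylor x ⬝ᵥ k.numerator x = (k.negHessian x).det :=
  mul_left_cancel₀ (pow_ne_zero 2 (Finset.prod_ne_zero_iff.mpr fun i _ ↦ hx.one_sub_ne_zero i))
    (hx.det_kltKernel.symm.trans (det_kltKernel_self hx))

end Orderings

section Amplitude

variable [Field F]

/-- The Mandelstam invariant `s₁₂`, obtained from momentum conservation. -/
def s12 (k : Mandelstam (Fin 3) F) : F :=
  k.pair 0 1 + k.pair 0 2 + k.one 0 + k.pair 1 2 + k.one 1 + k.one 2

/-- The Mandelstam invariant `s₁₆`, obtained from momentum conservation. -/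
def s16 (k : Mandelstam (Fin 3) F) : F :=
  k.zero 0 + k.zero 1 + k.zero 2 + k.pair 0 1 + k.pair 0 2 + k.pair 1 2

/-- The Mandelstam invariant `s₁₂₃ = s₄₅₆`. -/
def s123 (k : Mandelstam (Fin 3) F) : F :=
  k.pair 1 2 + k.one 1 + k.one 2

/-- The Mandelstam invariant `s₂₃₄`. -/
def s234 (k : Mandelstam (Fin 3) F) : F :=
  k.zero 0 + k.zero 1 + k.pair 0 1

/-- The Mandelstam invariant `s₃₄₅`. -/
def s345 (k : Mandelstam (Fin 3) F) : F :=
  k.pair 0 1 + k.pair 0 2 + k.pair 1 2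

/-- Nonvanishing of the nine planar propagators, the invariants `s₂₃ = zero 0`, `s₃₄ = pair 0 1`,
`s₄₅ = pair 1 2`, `s₅₆ = one 2` and the five above. -/
structure PropagatorsNeZero (k : Mandelstam (Fin 3) F) : Prop where
  s23_ne_zero : k.zero 0 ≠ 0
  s34_ne_zero : k.pair 0 1 ≠ 0
  s45_ne_zero : k.pair 1 2 ≠ 0
  s56_ne_zero : k.one 2 ≠ 0
  s12_ne_zero : k.s12 ≠ 0
  s16_ne_zero : k.s16 ≠ 0
  s123_ne_zero : k.s123 ≠ 0
  s234_ne_zero : k.s234 ≠ 0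
  s345_ne_zero : k.s345 ≠ 0

theorem Positive.propagatorsNeZero_map {k : Mandelstam (Fin 3) ℝ} (hk : k.Positive) :
    (k.map Complex.ofRealHom).PropagatorsNeZero := by
  have hz := hk.zero_pos
  have ho := hk.one_pos
  have h01 : 0 < k.pair 0 1 := hk.pair_pos (by decide)
  have h02 : 0 < k.pair 0 2 := hk.pair_pos (by decide)
  have h12 : 0 < k.pair 1 2 := hk.pair_pos (by decide)
  have := hz 0; have := hz 1; have := hz 2; have := ho 0; have := ho 1; have := ho 2
  constructor <;> simp only [map, s12, s16, s123, s234, s345, ← map_add, ne_eq, map_eq_zero] <;>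
    positivity

/-- The doubly ordered biadjoint scalar amplitude of the identity ordering and the ordering `β`:
a signed sum of the propagator products of the cubic trees that are planar for both orderings.
The case distinction on `β 0` and `β 1` enumerates the six permutations. -/
def biadjoint (k : Mandelstam (Fin 3) F) (β : Perm (Fin 3)) : F :=
  match β 0, β 1 with
  | 0, 1 =>
    1 / (k.s12 * k.pair 0 1 * k.one 2) + 1 / (k.s12 * k.one 2 * k.s123) +
    1 / (k.zero 0 * k.one 2 * k.s123) + 1 / (k.zero 0 * k.one 2 * k.s234) +
    1 / (k.pair 0 1 * k.one 2 * k.s234) + 1 / (k.s16 * k.zero 0 * k.pair 1 2) +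
    1 / (k.s12 * k.pair 0 1 * k.s345) + 1 / (k.s12 * k.pair 1 2 * k.s123) +
    1 / (k.s12 * k.pair 1 2 * k.s345) + 1 / (k.s16 * k.zero 0 * k.s234) +
    1 / (k.s16 * k.pair 0 1 * k.s234) + 1 / (k.s16 * k.pair 0 1 * k.s345) +
    1 / (k.s16 * k.pair 1 2 * k.s345) + 1 / (k.zero 0 * k.pair 1 2 * k.s123)
  | 1, 0 =>
    -(1 / (k.s12 * k.pair 0 1 * k.one 2) + 1 / (k.pair 0 1 * k.one 2 * k.s234) +
      1 / (k.s16 * k.pair 0 1 * k.s234) + 1 / (k.s12 * k.pair 0 1 * k.s345) +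
      1 / (k.s16 * k.pair 0 1 * k.s345))
  | 0, 2 =>
    -(1 / (k.s12 * k.pair 1 2 * k.s123) + 1 / (k.zero 0 * k.pair 1 2 * k.s123) +
      1 / (k.s16 * k.zero 0 * k.pair 1 2) + 1 / (k.s12 * k.pair 1 2 * k.s345) +
      1 / (k.s16 * k.pair 1 2 * k.s345))
  | 1, 2 => -(1 / (k.s12 * k.pair 1 2 * k.s345) + 1 / (k.s16 * k.pair 1 2 * k.s345))
  | 2, 0 => -(1 / (k.s12 * k.pair 0 1 * k.s345) + 1 / (k.s16 * k.pair 0 1 * k.s345))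
  | _, _ =>
    1 / (k.s12 * k.pair 0 1 * k.s345) + 1 / (k.s16 * k.pair 0 1 * k.s345) +
    1 / (k.s12 * k.pair 1 2 * k.s345) + 1 / (k.s16 * k.pair 1 2 * k.s345)

variable {k : Mandelstam (Fin 3) F} {x : Fin 3 → F}

theorem PropagatorsNeZero.biadjoint_dotProduct (hk : k.PropagatorsNeZero) (f : Perm (Fin 3) → F)
    {t₁ t₂ t₃ t₄ d : F}
    (h234 : k.s234 * (k.one 2 * t₂) = f 1 / k.zero 0 + (f 1 - f (swap 0 1)) / k.pair 0 1)
    (h123 : k.s123 * (k.zero 0 * t₃) = f 1 / k.one 2 + (f 1 - f (swap 1 2)) / k.pair 1 2)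
    (h345 : k.s345 * d =
      (f 1 - f (swap 0 1) - f (swap 1 2 * swap 0 1) + f (swap 0 2)) / k.pair 0 1 +
        (f 1 - f (swap 1 2) - f (swap 0 1 * swap 1 2) + f (swap 0 2)) / k.pair 1 2)
    (h16 : k.s16 * t₁ = k.one 2 * t₂ + (f 1 - f (swap 1 2)) / (k.zero 0 * k.pair 1 2) + d)
    (h12 : k.s12 * t₄ = k.zero 0 * t₃ + (f 1 - f (swap 0 1)) / (k.pair 0 1 * k.one 2) + d) :
    k.biadjoint ⬝ᵥ f = t₁ + t₂ + t₃ + t₄ := by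
  obtain ⟨n23, n34, n45, n56, n12, n16, n123, n234, n345⟩ := hk
  have hbiadjoint : k.biadjoint ⬝ᵥ f = k.biadjoint 1 * f 1 + k.biadjoint (swap 0 1) * f (swap 0 1) +
      k.biadjoint (swap 1 2) * f (swap 1 2) +
      k.biadjoint (swap 0 1 * swap 1 2) * f (swap 0 1 * swap 1 2) +
      k.biadjoint (swap 1 2 * swap 0 1) * f (swap 1 2 * swap 0 1) +
      k.biadjoint (swap 0 2) * f (swap 0 2) := sum_perm_fin_three _
  have e234 := eq_div_of_mul_eq n234 ((mul_comm _ _).trans h234)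
  have e123 := eq_div_of_mul_eq n123 ((mul_comm _ _).trans h123)
  have e345 := eq_div_of_mul_eq n345 ((mul_comm _ _).trans h345)
  rw [e234, e345] at h16
  rw [e123, e345] at h12
  rw [hbiadjoint, eq_div_of_mul_eq n16 ((mul_comm _ _).trans h16),
    eq_div_of_mul_eq n56 ((mul_comm _ _).trans e234),
    eq_div_of_mul_eq n23 ((mul_comm _ _).trans e123),
    eq_div_of_mul_eq n12 ((mul_comm _ _).trans h12)]
  simp only [biadjoint, Fin.isValue, Perm.coe_one, id_eq, one_div, _root_.mul_inv_rev,
    swap_apply_left, swap_apply_right, neg_add_rev, swap_apply_def, zero_ne_one, ↓reduceIte,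
    Fin.reduceEq, Perm.coe_mul, Function.comp_apply, one_ne_zero]
  ring

theorem numerator_one_sub_swap_zero_one (k : Mandelstam (Fin 3) F) (x : Fin 3 → F) :
    k.numerator x 1 - k.numerator x (swap 0 1) =
      k.pair 0 1 / (x 1 - x 0) * (k.zero 0 / x 0 + k.zero 1 / x 1) *
        (k.zero 2 / x 2 + k.pair 0 2 / (x 2 - x 0) + k.pair 1 2 / (x 2 - x 1)) := by
  simp only [numerator, chain, Perm.coe_one, id_eq, swap_apply_def, k.pair_comm 2, k.pair_comm 1 0,
    ↓reduceIte, Fin.isValue, Fin.reduceEq, one_ne_zero]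
  rw [← neg_sub (x 1) (x 0), div_neg]
  ring

theorem numerator_one_sub_swap_one_two (k : Mandelstam (Fin 3) F) (x : Fin 3 → F) :
    k.numerator x 1 - k.numerator x (swap 1 2) =
      k.pair 1 2 / (x 2 - x 1) * (k.zero 0 / x 0) *
        (k.zero 1 / x 1 + k.pair 0 1 / (x 1 - x 0) + k.zero 2 / x 2 +
          k.pair 0 2 / (x 2 - x 0)) := by
  simp only [numerator, chain, Perm.coe_one, id_eq, swap_apply_def, k.pair_comm 2, k.pair_comm 1 0,
    ↓reduceIte, Fin.isValue, Fin.reduceEq, zero_ne_one]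
  rw [← neg_sub (x 2) (x 1), div_neg]
  ring

theorem numerator_alternating_zero_one (k : Mandelstam (Fin 3) F) (x : Fin 3 → F) :
    k.numerator x 1 - k.numerator x (swap 0 1) - k.numerator x (swap 1 2 * swap 0 1) +
      k.numerator x (swap 0 2) =
      k.pair 0 1 / (x 1 - x 0) * (k.pair 0 2 / (x 2 - x 0) + k.pair 1 2 / (x 2 - x 1)) *
        ∑ i, k.zero i / x i := by
  simp only [numerator, chain, Perm.coe_one, id_eq, swap_apply_def, k.pair_comm 2, k.pair_comm 1 0,
    Perm.coe_mul, Function.comp_apply, ↓reduceIte, Fin.isValue, Fin.reduceEq, one_ne_zero,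
    zero_ne_one, Fin.sum_univ_three]
  rw [← neg_sub (x 1) (x 0), ← neg_sub (x 2) (x 0), ← neg_sub (x 2) (x 1)]
  simp only [div_neg]
  ring

theorem numerator_alternating_one_two (k : Mandelstam (Fin 3) F) (x : Fin 3 → F) :
    k.numerator x 1 - k.numerator x (swap 1 2) - k.numerator x (swap 0 1 * swap 1 2) +
      k.numerator x (swap 0 2) =
      k.pair 1 2 / (x 2 - x 1) * (k.pair 0 1 / (x 1 - x 0) + k.pair 0 2 / (x 2 - x 0)) *
        ∑ i, k.zero i / x i := by
  simp only [numerator, chain, Perm.coe_one, id_eq, swap_apply_def, k.pair_comm 2, k.pair_comm 1 0,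
    Perm.coe_mul, Function.comp_apply, ↓reduceIte, Fin.isValue, Fin.reduceEq, one_ne_zero,
    zero_ne_one, Fin.sum_univ_three]
  rw [← neg_sub (x 1) (x 0), ← neg_sub (x 2) (x 0), ← neg_sub (x 2) (x 1)]
  simp only [div_neg]
  ring

theorem scatter_fin_three (k : Mandelstam (Fin 3) F) (x : Fin 3 → F) :
    k.scatter x =
      ![k.zero 0 / x 0 - k.pair 0 1 / (x 1 - x 0) - k.pair 0 2 / (x 2 - x 0) - k.one 0 / (1 - x 0),
        k.zero 1 / x 1 + k.pair 0 1 / (x 1 - x 0) - k.pair 1 2 / (x 2 - x 1) - k.one 1 / (1 - x 1),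
        k.zero 2 / x 2 + k.pair 0 2 / (x 2 - x 0) + k.pair 1 2 / (x 2 - x 1) -
          k.one 2 / (1 - x 2)] := by
  ext i
  rw [scatter, Fin.sum_univ_three]
  fin_cases i <;> simp only [Fin.zero_eta, Fin.mk_one, Fin.reduceFinMk, cons_val]
  · rw [← neg_sub (x 1), ← neg_sub (x 2), div_neg, div_neg, sub_self, div_zero]
    ring
  · rw [← neg_sub (x 2), div_neg, k.pair_comm 1 0, sub_self, div_zero]
    ring
  · rw [k.pair_comm 2 0, k.pair_comm 2 1, sub_self, div_zero]
    ring

theorem IsSolution.scatter_one (hx : k.IsSolution x) :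
    k.zero 1 / x 1 + k.pair 0 1 / (x 1 - x 0) =
      k.pair 1 2 / (x 2 - x 1) + k.one 1 / (1 - x 1) := by
  have h := hx.scatter_eq_zero 1
  simp only [scatter_fin_three, cons_val] at h
  linear_combination h

theorem IsSolution.scatter_two (hx : k.IsSolution x) :
    k.zero 2 / x 2 + k.pair 0 2 / (x 2 - x 0) + k.pair 1 2 / (x 2 - x 1) =
      k.one 2 / (1 - x 2) :=
  sub_eq_zero.mp ((congrFun (k.scatter_fin_three x) 2).symm.trans (hx.scatter_eq_zero 2))

theorem IsSolution.numerator_one (hx : k.IsSolution x) :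
    k.numerator x 1 =
      k.zero 0 / x 0 * (k.zero 1 / x 1 + k.pair 0 1 / (x 1 - x 0)) * (k.one 2 / (1 - x 2)) := by
  rw [← hx.scatter_two]
  simp only [numerator, chain, Perm.coe_one, id_eq, k.pair_comm 2, k.pair_comm 1 0]

theorem IsSolution.s234_mul (hk : k.PropagatorsNeZero) (hx : k.IsSolution x) :
    k.s234 * (k.one 2 * (1 / (x 0 * (x 1 - x 0) * (1 - x 2)))) =
      k.numerator x 1 / k.zero 0 + (k.numerator x 1 - k.numerator x (swap 0 1)) / k.pair 0 1 := by
  have := hk.s23_ne_zero; have := hk.s34_ne_zero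
  have := hx.ne_zero 0; have := hx.ne_zero 1
  have := hx.sub_ne_zero (show (1 : Fin 3) ≠ 0 by decide)
  have := hx.one_sub_ne_zero 2
  rw [numerator_one_sub_swap_zero_one, hx.scatter_two, hx.numerator_one, s234]
  field_simp
  ring

theorem IsSolution.s123_mul (hk : k.PropagatorsNeZero) (hx : k.IsSolution x) :
    k.s123 * (k.zero 0 * (1 / (x 0 * (x 2 - x 1) * (1 - x 2)))) =
      k.numerator x 1 / k.one 2 + (k.numerator x 1 - k.numerator x (swap 1 2)) / k.pair 1 2 := by
  have := hk.s56_ne_zero; have := hk.s45_ne_zero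
  have := hx.ne_zero 0; have := hx.one_sub_ne_zero 1; have := hx.one_sub_ne_zero 2
  have := hx.sub_ne_zero (show (2 : Fin 3) ≠ 1 by decide)
  have hsum : k.zero 1 / x 1 + k.pair 0 1 / (x 1 - x 0) + k.zero 2 / x 2 +
      k.pair 0 2 / (x 2 - x 0) = k.one 1 / (1 - x 1) + k.one 2 / (1 - x 2) := by
    linear_combination hx.scatter_one + hx.scatter_two
  rw [numerator_one_sub_swap_one_two, hsum, hx.numerator_one, hx.scatter_one, s123]
  field_simp
  ring

theorem IsSolution.s345_mul (hk : k.PropagatorsNeZero) (hx : k.IsSolution x) :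
    k.s345 * ((∑ i, k.zero i / x i) / ((x 1 - x 0) * (x 2 - x 1))) =
      (k.numerator x 1 - k.numerator x (swap 0 1) - k.numerator x (swap 1 2 * swap 0 1) +
          k.numerator x (swap 0 2)) / k.pair 0 1 +
        (k.numerator x 1 - k.numerator x (swap 1 2) - k.numerator x (swap 0 1 * swap 1 2) +
          k.numerator x (swap 0 2)) / k.pair 1 2 := by
  have := hk.s34_ne_zero; have := hk.s45_ne_zero
  have := hx.sub_ne_zero (show (1 : Fin 3) ≠ 0 by decide)
  have := hx.sub_ne_zero (show (2 : Fin 3) ≠ 0 by decide)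
  have := hx.sub_ne_zero (show (2 : Fin 3) ≠ 1 by decide)
  rw [numerator_alternating_zero_one, numerator_alternating_one_two, s345]
  generalize ∑ i, k.zero i / x i = S
  field_simp
  ring

theorem IsSolution.s16_mul (hk : k.PropagatorsNeZero) (hx : k.IsSolution x) :
    k.s16 * (1 / (x 0 * (x 1 - x 0) * (x 2 - x 1))) =
      k.one 2 * (1 / (x 0 * (x 1 - x 0) * (1 - x 2))) +
        (k.numerator x 1 - k.numerator x (swap 1 2)) / (k.zero 0 * k.pair 1 2) +
        (∑ i, k.zero i / x i) / ((x 1 - x 0) * (x 2 - x 1)) := by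
  have := hk.s23_ne_zero; have := hk.s45_ne_zero
  have := hx.ne_zero 0; have := hx.ne_zero 1; have := hx.ne_zero 2
  have := hx.sub_ne_zero (show (1 : Fin 3) ≠ 0 by decide)
  have := hx.sub_ne_zero (show (2 : Fin 3) ≠ 0 by decide)
  have := hx.sub_ne_zero (show (2 : Fin 3) ≠ 1 by decide)
  have hone : k.one 2 * (1 / (x 0 * (x 1 - x 0) * (1 - x 2))) =
      k.one 2 / (1 - x 2) / (x 0 * (x 1 - x 0)) := by
    have := hx.one_sub_ne_zero 2
    field_simp
  rw [numerator_one_sub_swap_one_two, hone, ← hx.scatter_two, s16, Fin.sum_univ_three]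
  field_simp
  ring

-- The generator of dilations fixing `1` and `∞`.
theorem IsConfiguration.sum_one_sub_mul_scatter (hx : IsConfiguration x) :
    ∑ i, (1 - x i) * k.scatter x i = ∑ i, k.zero i / x i - ∑ i, k.zero i - k.s12 := by
  have hzero : ∀ i, k.zero i / x i * x i = k.zero i := fun i ↦ div_mul_cancel₀ _ (hx.ne_zero i)
  have hone : ∀ i, k.one i / (1 - x i) * (1 - x i) = k.one i := fun i ↦
    div_mul_cancel₀ _ (hx.one_sub_ne_zero i)
  have hpair : ∀ {i j}, j ≠ i → k.pair i j / (x j - x i) * (x j - x i) = k.pair i j := fun hij ↦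
    div_mul_cancel₀ _ (hx.sub_ne_zero hij)
  have h01 := hpair (show (1 : Fin 3) ≠ 0 by decide)
  have h02 := hpair (show (2 : Fin 3) ≠ 0 by decide)
  have h12 := hpair (show (2 : Fin 3) ≠ 1 by decide)
  simp only [scatter_fin_three, s12, Fin.sum_univ_three, cons_val]
  linear_combination -hzero 0 - hzero 1 - hzero 2 - hone 0 - hone 1 - hone 2 - h01 - h02 - h12

theorem IsSolution.s12_mul (hk : k.PropagatorsNeZero) (hx : k.IsSolution x) :
    k.s12 * (1 / ((x 1 - x 0) * (x 2 - x 1) * (1 - x 2))) =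
      k.zero 0 * (1 / (x 0 * (x 2 - x 1) * (1 - x 2))) +
        (k.numerator x 1 - k.numerator x (swap 0 1)) / (k.pair 0 1 * k.one 2) +
        (∑ i, k.zero i / x i) / ((x 1 - x 0) * (x 2 - x 1)) := by
  have := hk.s34_ne_zero; have := hk.s56_ne_zero
  have := hx.ne_zero 0; have := hx.ne_zero 1; have := hx.ne_zero 2
  have := hx.sub_ne_zero (show (1 : Fin 3) ≠ 0 by decide)
  have := hx.sub_ne_zero (show (2 : Fin 3) ≠ 1 by decide)
  have := hx.one_sub_ne_zero 2
  have hs12 : k.s12 = ∑ i, k.zero i / x i - ∑ i, k.zero i := by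
    have h := hx.sum_one_sub_mul_scatter (k := k)
    simp only [hx.scatter_eq_zero, mul_zero, Finset.sum_const_zero] at h
    linear_combination h
  rw [numerator_one_sub_swap_zero_one, hx.scatter_two, hs12, Fin.sum_univ_three,
    Fin.sum_univ_three]
  field_simp
  ring

theorem IsSolution.biadjoint_dotProduct_numerator (hk : k.PropagatorsNeZero)
    (hx : k.IsSolution x) : k.biadjoint ⬝ᵥ k.numerator x = parkeTaylor x 1 := by
  have := hx.ne_zero 0; have := hx.one_sub_ne_zero 2
  have := hx.sub_ne_zero (show (1 : Fin 3) ≠ 0 by decide)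
  have := hx.sub_ne_zero (show (2 : Fin 3) ≠ 1 by decide)
  rw [hk.biadjoint_dotProduct _ (hx.s234_mul hk) (hx.s123_mul hk) (hx.s345_mul hk) (hx.s16_mul hk)
    (hx.s12_mul hk)]
  simp only [parkeTaylor, Perm.coe_one, id_eq]
  field_simp
  ring

end Amplitude

section PositiveParametrization

/-- The substitution `xᵢ = (y₁ + ⋯ + yᵢ) / (1 + y₁ + y₂ + y₃)` of the positive parametrization. -/
def fromPositive (y : Fin 3 → ℂ) : Fin 3 → ℂ :=
  ![y 0 / (1 + (y 0 + y 1 + y 2)), (y 0 + y 1) / (1 + (y 0 + y 1 + y 2)),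
    (y 0 + y 1 + y 2) / (1 + (y 0 + y 1 + y 2))]

/-- The positive parameters of a configuration of punctures, inverse to `fromPositive`. -/
def toPositive (x : Fin 3 → ℂ) : Fin 3 → ℂ :=
  ![x 0 / (1 - x 2), (x 1 - x 0) / (1 - x 2), (x 2 - x 1) / (1 - x 2)]

/-- The nine forms of `amp6L` in the coordinates `x`, up to the common factor `1 - x 2`. -/
def planarForm (x : Fin 3 → ℂ) : Fin 9 → ℂ :=
  ![x 0, x 1 - x 0, x 2 - x 1, x 1, x 2, x 2 - x 0, 1 - x 0, 1 - x 1, 1]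

/-- The Jacobian matrix `∂xᵢ/∂yⱼ` of the positive parametrization, divided by `1 - x 2`. -/
def jacobian (x : Fin 3 → ℂ) : Matrix (Fin 3) (Fin 3) ℂ :=
  !![1 - x 0, -x 0, -x 0; 1 - x 1, 1 - x 1, -x 1; 1 - x 2, 1 - x 2, 1 - x 2]

/-- The coefficients of the likelihood `L` with the given Mandelstam invariants. -/
def coeff (k : Mandelstam (Fin 3) ℝ) : Fin 9 → ℝ :=
  amp6Coeff (k.zero 0) (k.zero 1) (k.zero 2) (k.pair 0 1) (k.pair 0 2) (k.pair 1 2)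
    (k.one 0) (k.one 1) (k.one 2)

variable {k : Mandelstam (Fin 3) ℝ} {x y : Fin 3 → ℂ}

theorem sum_univ_nine {M : Type*} [AddCommMonoid M] (f : Fin 9 → M) :
    ∑ a, f a = f 0 + f 1 + f 2 + f 3 + f 4 + f 5 + f 6 + f 7 + f 8 := by
  rw [Fin.sum_univ_castSucc, Fin.sum_univ_eight]
  rfl

theorem one_sub_fromPositive_two (hy : 1 + (y 0 + y 1 + y 2) ≠ 0) :
    1 - fromPositive y 2 = 1 / (1 + (y 0 + y 1 + y 2)) := by
  simp only [fromPositive, cons_val]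
  field_simp
  ring

theorem toPositive_fromPositive (hy : 1 + (y 0 + y 1 + y 2) ≠ 0) :
    toPositive (fromPositive y) = y := by
  ext i
  rw [toPositive, one_sub_fromPositive_two hy]
  fin_cases i <;>
    simp only [fromPositive, cons_val, Fin.zero_eta, Fin.mk_one, Fin.reduceFinMk] <;>
    field_simp <;> ring

theorem fromPositive_toPositive (hx : 1 - x 2 ≠ 0) : fromPositive (toPositive x) = x := by
  ext i
  have hsum : 1 + (toPositive x 0 + toPositive x 1 + toPositive x 2) = 1 / (1 - x 2) := by
    simp only [toPositive, cons_val]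
    field_simp
    ring
  rw [fromPositive, hsum]
  fin_cases i <;>
    simp only [toPositive, cons_val, Fin.zero_eta, Fin.mk_one, Fin.reduceFinMk] <;>
    field_simp <;> ring

theorem amp6L_toPositive (hx : 1 - x 2 ≠ 0) (a : Fin 9) :
    amp6L a (toPositive x) = planarForm x a / (1 - x 2) := by
  fin_cases a <;>
    simp only [amp6L, amp6Const, amp6Lin, Fin.sum_univ_three, toPositive, planarForm, cons_val,
      cons_val', Fin.zero_eta, Fin.mk_one, Fin.reduceFinMk, Complex.ofReal_zero,
      Complex.ofReal_one] <;>
    field_simp <;> ring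

theorem det_jacobian (x : Fin 3 → ℂ) : (jacobian x).det = 1 - x 2 := by
  simp only [jacobian, det_fin_three, of_apply, cons_val, cons_val']
  ring

theorem IsConfiguration.planarForm_ne_zero (hx : IsConfiguration x) (a : Fin 9) :
    planarForm x a ≠ 0 := by
  have h10 := hx.sub_ne_zero (show (1 : Fin 3) ≠ 0 by decide)
  have h20 := hx.sub_ne_zero (show (2 : Fin 3) ≠ 0 by decide)
  have h21 := hx.sub_ne_zero (show (2 : Fin 3) ≠ 1 by decide)
  have hzero := hx.ne_zero
  have hone := hx.one_sub_ne_zero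
  fin_cases a <;> simp [planarForm, *]

theorem isConfiguration_of_planarForm_ne_zero (hx : ∀ a, planarForm x a ≠ 0)
    (hx₂ : 1 - x 2 ≠ 0) : IsConfiguration x where
  ne_zero i := by
    fin_cases i
    exacts [hx 0, hx 3, hx 4]
  ne_one i := (sub_ne_zero.mp <| by
    fin_cases i
    exacts [hx 6, hx 7, hx₂] : 1 ≠ x i).symm
  injective i j hij := by
    have h10 : x 1 ≠ x 0 := sub_ne_zero.mp (hx 1)
    have h21 : x 2 ≠ x 1 := sub_ne_zero.mp (hx 2)
    have h20 : x 2 ≠ x 0 := sub_ne_zero.mp (hx 5)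
    fin_cases i <;> fin_cases j <;> simp_all

theorem sum_coeff_mul_lin_div_planarForm (hx : IsConfiguration x) (j : Fin 3) :
    ∑ a, (k.coeff a : ℂ) * amp6Lin a j / planarForm x a =
      ((jacobian x)ᵀ *ᵥ (k.map Complex.ofRealHom).scatter x) j := by
  have h := hx.sum_one_sub_mul_scatter (k := k.map Complex.ofRealHom)
  rw [sum_univ_nine, mulVec, dotProduct]
  simp only [scatter_fin_three, s12, Fin.sum_univ_three, cons_val] at h ⊢
  fin_cases j <;>
    simp only [coeff, amp6Coeff, amp6Lin, planarForm, jacobian, map, Complex.ofRealHom_eq_coe,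
      transpose_apply, of_apply, cons_val, cons_val', Fin.zero_eta, Fin.mk_one, Fin.reduceFinMk,
      Complex.ofReal_zero, Complex.ofReal_one, Complex.ofReal_neg, Complex.ofReal_add] at h ⊢ <;>
    linear_combination -h

theorem toPositive_mem_amp6Crit_iff (hx : 1 - x 2 ≠ 0) :
    toPositive x ∈ amp6Crit k.coeff ↔ (k.map Complex.ofRealHom).IsSolution x := by
  have hforms : (∀ a, amp6L a (toPositive x) ≠ 0) ↔ IsConfiguration x := by
    simp only [amp6L_toPositive hx, ne_eq, div_eq_zero_iff, hx, or_false]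
    exact ⟨fun h ↦ isConfiguration_of_planarForm_ne_zero h hx, fun h ↦ h.planarForm_ne_zero⟩
  have hgrad (hc : IsConfiguration x) :
      (∀ j, ∑ a, (k.coeff a : ℂ) * amp6Lin a j / amp6L a (toPositive x) = 0) ↔
        (k.map Complex.ofRealHom).scatter x = 0 := by
    simp only [amp6L_toPositive hx, div_div_eq_mul_div, mul_div_right_comm _ (1 - x 2),
      ← Finset.sum_mul, sum_coeff_mul_lin_div_planarForm hc, mul_eq_zero, hx, or_false]
    refine ⟨fun h ↦ eq_zero_of_mulVec_eq_zero ?_ (funext h), fun h j ↦ by simp [h]⟩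
    rwa [det_transpose, det_jacobian]
  rw [amp6Crit, Set.mem_ofPred_eq, hforms]
  exact ⟨fun h ↦ ⟨h.1, congrFun ((hgrad h.1).mp h.2)⟩,
    fun h ↦ ⟨h.1, (hgrad h.1).mpr (funext h.2)⟩⟩

theorem amp6Crit_coeff (k : Mandelstam (Fin 3) ℝ) :
    amp6Crit k.coeff = toPositive '' {x | (k.map Complex.ofRealHom).IsSolution x} := by
  ext y
  refine ⟨fun hy ↦ ?_, fun ⟨x, hx, hxy⟩ ↦
    hxy ▸ (toPositive_mem_amp6Crit_iff (hx.one_sub_ne_zero 2)).mpr hx⟩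
  have hy₁ : 1 + (y 0 + y 1 + y 2) ≠ 0 := by
    simpa [amp6L, amp6Const, amp6Lin, Fin.sum_univ_three] using hy.1 8
  have hx₂ : 1 - fromPositive y 2 ≠ 0 := by
    rw [one_sub_fromPositive_two hy₁]
    exact one_div_ne_zero hy₁
  refine ⟨fromPositive y, ?_, toPositive_fromPositive hy₁⟩
  rwa [Set.mem_ofPred_eq, ← toPositive_mem_amp6Crit_iff hx₂, toPositive_fromPositive hy₁]

theorem transpose_jacobian_mul_negHessian_mul_jacobian (hx : 1 - x 2 ≠ 0) (i j : Fin 3) :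
    ((jacobian x)ᵀ * (k.map Complex.ofRealHom).negHessian x * jacobian x) i j =
      ∑ a, (k.coeff a : ℂ) * (amp6Lin a i - planarForm x a) * (amp6Lin a j - planarForm x a) /
        planarForm x a ^ 2 + k.one 2 := by
  have hone : (k.one 2 : ℂ) = (k.one 2 : ℂ) / (1 - x 2) ^ 2 * (1 - x 2) ^ 2 := by
    field_simp
  rw [hone, sum_univ_nine]
  simp only [mul_apply, transpose_apply, Fin.sum_univ_three, negHessian, groundedLaplacian_apply]
  fin_cases i <;> fin_cases j <;>
    simp only [coeff, amp6Coeff, amp6Lin, planarForm, jacobian, map, Complex.ofRealHom_eq_coe,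
      k.pair_comm 1 0, k.pair_comm 2, of_apply, cons_val, cons_val', Fin.zero_eta, Fin.mk_one,
      Fin.reduceFinMk, Complex.ofReal_zero, Complex.ofReal_one, Complex.ofReal_neg,
      Complex.ofReal_add, Fin.isValue, Fin.reduceEq, zero_ne_one, one_ne_zero, ↓reduceIte] <;>
    ring

theorem IsSolution.sum_coeff_mul_lin_mul_lin_div (hx : (k.map Complex.ofRealHom).IsSolution x)
    (i j : Fin 3) :
    ∑ a, (k.coeff a : ℂ) * amp6Lin a i * amp6Lin a j / planarForm x a ^ 2 =
      ((jacobian x)ᵀ * (k.map Complex.ofRealHom).negHessian x * jacobian x) i j := by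
  have hgrad : ∀ j, ∑ a, (k.coeff a : ℂ) * amp6Lin a j / planarForm x a = 0 := fun j ↦ by
    rw [sum_coeff_mul_lin_div_planarForm hx.toIsConfiguration,
      funext hx.scatter_eq_zero]
    exact congrFun (mulVec_zero _) j
  have hsum : ∑ a, (k.coeff a : ℂ) = -k.one 2 := by
    rw [sum_univ_nine]
    simp only [coeff, amp6Coeff, cons_val, Complex.ofReal_neg, Complex.ofReal_add]
    ring
  have hform : ∀ a, (k.coeff a : ℂ) * (amp6Lin a i - planarForm x a) *
      (amp6Lin a j - planarForm x a) / planarForm x a ^ 2 =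
      k.coeff a * amp6Lin a i * amp6Lin a j / planarForm x a ^ 2 -
        k.coeff a * amp6Lin a i / planarForm x a - k.coeff a * amp6Lin a j / planarForm x a +
        k.coeff a := fun a ↦ by
    have := hx.planarForm_ne_zero a
    field_simp
    ring
  rw [transpose_jacobian_mul_negHessian_mul_jacobian (hx.one_sub_ne_zero 2)]
  simp only [hform, Finset.sum_add_distrib, Finset.sum_sub_distrib, hgrad, hsum]
  ring

theorem IsSolution.amp6H_toPositive (hx : (k.map Complex.ofRealHom).IsSolution x) :
    amp6H k.coeff (toPositive x) =
      -(diagonal ((1 - x 2) • toPositive x) *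
        ((jacobian x)ᵀ * (k.map Complex.ofRealHom).negHessian x * jacobian x) *
          diagonal ((1 - x 2) • toPositive x)) := by
  have hx₂ := hx.one_sub_ne_zero 2
  have hcrit := (toPositive_mem_amp6Crit_iff hx₂).mpr hx
  ext i j
  have hterm : ∀ a, (k.coeff a : ℂ) * amp6Lin a j *
      ((if i = j then toPositive x i * amp6L a (toPositive x) else 0) -
        toPositive x i * toPositive x j * amp6Lin a i) / amp6L a (toPositive x) ^ 2 =
      (if i = j then toPositive x i else 0) *
        (k.coeff a * amp6Lin a j / amp6L a (toPositive x)) -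
      toPositive x i * toPositive x j * (1 - x 2) ^ 2 *
        (k.coeff a * amp6Lin a i * amp6Lin a j / planarForm x a ^ 2) := fun a ↦ by
    have := hx.planarForm_ne_zero a
    rw [amp6L_toPositive hx₂]
    split_ifs
    · field_simp
    · field_simp
      ring
  rw [Matrix.neg_apply, mul_diagonal, diagonal_mul, ← hx.sum_coeff_mul_lin_mul_lin_div]
  simp only [amp6H, of_apply, hterm, Finset.sum_sub_distrib, ← Finset.mul_sum, hcrit.2 j,
    Pi.smul_apply, smul_eq_mul]
  ring

theorem IsSolution.det_amp6H_toPositive (hx : (k.map Complex.ofRealHom).IsSolution x) :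
    (amp6H k.coeff (toPositive x)).det =
      -((k.map Complex.ofRealHom).negHessian x).det / parkeTaylor x 1 ^ 2 := by
  have hx₂ := hx.one_sub_ne_zero 2
  have hdiag : (∏ i, ((1 - x 2) • toPositive x) i) * (1 - x 2) = 1 / parkeTaylor x 1 := by
    simp only [Fin.prod_univ_three, Pi.smul_apply, smul_eq_mul, toPositive, cons_val, parkeTaylor,
      Perm.coe_one, id_eq, one_div_one_div, mul_div_cancel₀ _ hx₂]
  rw [hx.amp6H_toPositive, det_neg, det_mul, det_mul, det_mul, det_mul, det_transpose, det_jacobian,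
    det_diagonal, Fintype.card_fin, div_eq_mul_one_div, ← _root_.one_div_pow, ← hdiag]
  ring

/-- The kinematic data of six punctures, in the gauge `x₂ = 0`, `x₆ = 1`, `x₁ = ∞`. -/
def sixPoint (s23 s24 s25 s34 s35 s45 s36 s46 s56 : ℝ) : Mandelstam (Fin 3) ℝ where
  zero := ![s23, s24, s25]
  one := ![s36, s46, s56]
  pair := !![0, s34, s35; s34, 0, s45; s35, s45, 0]
  pair_comm i j := by fin_cases i <;> fin_cases j <;> rfl

theorem sixPoint_positive {s23 s24 s25 s34 s35 s45 s36 s46 s56 : ℝ} (h23 : 0 < s23) (h24 : 0 < s24)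
    (h25 : 0 < s25) (h34 : 0 < s34) (h35 : 0 < s35) (h45 : 0 < s45) (h36 : 0 < s36) (h46 : 0 < s46)
    (h56 : 0 < s56) : (sixPoint s23 s24 s25 s34 s35 s45 s36 s46 s56).Positive where
  zero_pos i := by fin_cases i <;> assumption
  one_pos i := by fin_cases i <;> assumption
  pair_pos i j hij := by
    fin_cases i <;> fin_cases j <;> first | assumption | exact absurd rfl hij

theorem coeff_sixPoint (s23 s24 s25 s34 s35 s45 s36 s46 s56 : ℝ) :
    (sixPoint s23 s24 s25 s34 s35 s45 s36 s46 s56).coeff =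
      amp6Coeff s23 s24 s25 s34 s35 s45 s36 s46 s56 :=
  rfl

end PositiveParametrization

section Residues

variable {k : Mandelstam (Fin 3) ℝ}

theorem Positive.parkeTaylor_dotProduct_numerator_ne_zero (hk : k.Positive)
    (x : {x | (k.map Complex.ofRealHom).IsSolution x}) :
    parkeTaylor x.1 ⬝ᵥ (k.map Complex.ofRealHom).numerator x.1 ≠ 0 :=
  x.2.parkeTaylor_dotProduct_numerator_self.symm ▸ hk.det_map_negHessian_ne_zero x.2

theorem pairwise_parkeTaylor_dotProduct_numerator_eq_zero (k : Mandelstam (Fin 3) ℝ) :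
    Pairwise fun x y : {x | (k.map Complex.ofRealHom).IsSolution x} ↦
      parkeTaylor x.1 ⬝ᵥ (k.map Complex.ofRealHom).numerator y.1 = 0 :=
  fun x y hxy ↦ x.2.parkeTaylor_dotProduct_numerator_eq_zero y.2 (Subtype.coe_ne_coe.mpr hxy)

theorem Positive.linearIndependent_parkeTaylor (hk : k.Positive) :
    LinearIndependent ℂ fun x : {x | (k.map Complex.ofRealHom).IsSolution x} ↦ parkeTaylor x.1 :=
  linearIndependent_of_biorthogonal hk.parkeTaylor_dotProduct_numerator_ne_zero
    k.pairwise_parkeTaylor_dotProduct_numerator_eq_zero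

theorem Positive.finite_setOf_isSolution (hk : k.Positive) :
    {x | (k.map Complex.ofRealHom).IsSolution x}.Finite :=
  have := hk.linearIndependent_parkeTaylor.finite
  Set.toFinite _

theorem Positive.ncard_setOf_isSolution (hk : k.Positive) :
    {x | (k.map Complex.ofRealHom).IsSolution x}.ncard = Fintype.card (Perm (Fin 3)) := by
  have := hk.finite_setOf_isSolution.fintype
  rw [← Nat.card_coe_set_eq, Nat.card_eq_fintype_card]
  refine le_antisymm ?_ ?_
  · simpa using hk.linearIndependent_parkeTaylor.fintype_card_le_finrank
  · obtain ⟨x, hinj, hx⟩ := hk.exists_injective_isSolution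
    exact Fintype.card_le_of_injective
      (fun π ↦ ⟨Complex.ofRealHom ∘ x π, (hx π).map Complex.ofRealHom⟩) fun π σ h ↦
        hinj (Complex.ofReal_injective.comp_left (congrArg Subtype.val h))

theorem injOn_toPositive (k : Mandelstam (Fin 3) ℝ) :
    Set.InjOn toPositive {x | (k.map Complex.ofRealHom).IsSolution x} :=
  Set.LeftInvOn.injOn fun _ hx ↦ fromPositive_toPositive (hx.one_sub_ne_zero 2)

theorem Positive.det_amp6H_ne_zero (hk : k.Positive) {ξ : Fin 3 → ℂ} (hξ : ξ ∈ amp6Crit k.coeff) :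
    (amp6H k.coeff ξ).det ≠ 0 := by
  rw [amp6Crit_coeff] at hξ
  obtain ⟨x, hx, rfl⟩ := hξ
  rw [IsSolution.det_amp6H_toPositive hx]
  exact div_ne_zero (neg_ne_zero.mpr (hk.det_map_negHessian_ne_zero hx))
    (pow_ne_zero 2 (hx.parkeTaylor_ne_zero 1))

theorem Positive.finsum_neg_inv_det_amp6H (hk : k.Positive) :
    ∑ᶠ ξ ∈ amp6Crit k.coeff, -((amp6H k.coeff ξ).det)⁻¹ =
      (k.map Complex.ofRealHom).biadjoint 1 := by
  have := hk.finite_setOf_isSolution.fintype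
  have hcard : Fintype.card {x | (k.map Complex.ofRealHom).IsSolution x} =
      Fintype.card (Perm (Fin 3)) := by
    rw [← Nat.card_eq_fintype_card, Nat.card_coe_set_eq, hk.ncard_setOf_isSolution]
  rw [amp6Crit_coeff, finsum_mem_image k.injOn_toPositive, ← finsum_set_coe_eq_finsum_mem,
    finsum_eq_sum_of_fintype, ← sum_dotProduct_mul_div_of_biorthogonal hcard
      hk.parkeTaylor_dotProduct_numerator_ne_zero
      k.pairwise_parkeTaylor_dotProduct_numerator_eq_zero (k.map Complex.ofRealHom).biadjoint 1]
  refine Finset.sum_congr rfl fun ⟨x, hx⟩ _ ↦ ?_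
  rw [IsSolution.det_amp6H_toPositive hx,
    IsSolution.biadjoint_dotProduct_numerator hk.propagatorsNeZero_map hx,
    IsSolution.parkeTaylor_dotProduct_numerator_self hx, neg_div, inv_neg, neg_neg, inv_div, sq]

end Residues

end Mandelstam

/-- The six-point CHY string amplitude: `Crit(L)` consists of exactly six points,
the toric Hessian is nonsingular at each of them, and the global residue
`∑_{ξ ∈ Crit(L)} (-det H_L(ξ))⁻¹` equals the sum of the fourteen terms
corresponding to the planar trivalent trees with six leaves. -/
theorem stmt19 (s23 s24 s25 s34 s35 s45 s36 s46 s56 : ℝ)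
    (h23 : 0 < s23) (h24 : 0 < s24) (h25 : 0 < s25) (h34 : 0 < s34)
    (h35 : 0 < s35) (h45 : 0 < s45) (h36 : 0 < s36) (h46 : 0 < s46)
    (h56 : 0 < s56)
    (s12 s16 s123 s234 s345 : ℝ)
    (hs12 : s12 = s34 + s35 + s36 + s45 + s46 + s56)
    (hs16 : s16 = s23 + s24 + s25 + s34 + s35 + s45)
    (hs123 : s123 = s45 + s46 + s56)
    (hs234 : s234 = s23 + s24 + s34)
    (hs345 : s345 = s34 + s35 + s45) :
    (amp6Crit (amp6Coeff s23 s24 s25 s34 s35 s45 s36 s46 s56)).Finite ∧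
    (amp6Crit (amp6Coeff s23 s24 s25 s34 s35 s45 s36 s46 s56)).ncard = 6 ∧
    (∀ ξ ∈ amp6Crit (amp6Coeff s23 s24 s25 s34 s35 s45 s36 s46 s56),
      (amp6H (amp6Coeff s23 s24 s25 s34 s35 s45 s36 s46 s56) ξ).det ≠ 0) ∧
    ∑ᶠ ξ ∈ amp6Crit (amp6Coeff s23 s24 s25 s34 s35 s45 s36 s46 s56),
        (-((amp6H (amp6Coeff s23 s24 s25 s34 s35 s45 s36 s46 s56) ξ).det)⁻¹) =
      ((1 / (s12 * s34 * s56) + 1 / (s12 * s56 * s123) + 1 / (s23 * s56 * s123) +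
        1 / (s23 * s56 * s234) + 1 / (s34 * s56 * s234) + 1 / (s16 * s23 * s45) +
        1 / (s12 * s34 * s345) + 1 / (s12 * s45 * s123) + 1 / (s12 * s45 * s345) +
        1 / (s16 * s23 * s234) + 1 / (s16 * s34 * s234) + 1 / (s16 * s34 * s345) +
        1 / (s16 * s45 * s345) + 1 / (s23 * s45 * s123) : ℝ) : ℂ) := by
  subst hs12 hs16 hs123 hs234 hs345
  have hk := Mandelstam.sixPoint_positive h23 h24 h25 h34 h35 h45 h36 h46 h56
  rw [← Mandelstam.coeff_sixPoint]
  refine ⟨?_, ?_, fun ξ hξ ↦ hk.det_amp6H_ne_zero hξ, hk.finsum_neg_inv_det_amp6H.trans ?_⟩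
  · exact Mandelstam.amp6Crit_coeff _ ▸ hk.finite_setOf_isSolution.image _
  · rw [Mandelstam.amp6Crit_coeff, (Mandelstam.injOn_toPositive _).ncard_image,
      hk.ncard_setOf_isSolution]
    rfl
  · push_cast
    rfl

end
end
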